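/- arXiv:1804.02332 — 12 statements merged into one kernel-verified Lean document; each statement's English description precedes it below -/
import Mathlib

section
/- Let N ≥ 1, let a_1,…,a_N ≥ 0, let b_1,…,b_N > 0 be pairwise distinct, and set a = Σ_{j=1}^N a_j. Let p : [0,∞) → ℝ^{N+1} be differentiable with p'(t) = A* p(t) for all t ≥ 0 and p(0) = (u_0, 0, …, 0), where A* is the loop Markov generator matrix. Then the first component u(t) := p_0(t) satisfies the memory equation u'(t) = −a·u(t) + ∫_0^t K(t−s)·u(s) ds for all t ≥ 0, with u(0) = u_0. -/
open MeasureTheory Finset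

noncomputable def kerK (b : ℕ → ℝ) (j : ℕ) (t : ℝ) : ℝ :=
  ∑ i ∈ Finset.Icc 1 j, b i * (∏ k ∈ (Finset.Icc 1 j).erase i, b k / (b k - b i)) *
        Real.exp (-(b i) * t)

lemma kerK_zero (b : ℕ → ℝ) (t : ℝ) : kerK b 0 t = 0 := by simp [kerK]

lemma kerK_one_zero (b : ℕ → ℝ) : kerK b 1 0 = b 1 := by simp [kerK]

lemma kerK_deriv (b : ℕ → ℝ) (j : ℕ)
    (hbd : ∀ i ∈ Finset.Icc 1 (j+1), ∀ k ∈ Finset.Icc 1 (j+1), i ≠ k → b i ≠ b k) (t : ℝ) :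
    HasDerivAt (kerK b (j+1)) (b (j+1) * (kerK b j t - kerK b (j+1) t)) t := by
  have h : HasDerivAt (kerK b (j+1)) (∑ i ∈ Finset.Icc 1 (j+1), b i *
      (∏ k ∈ (Finset.Icc 1 (j+1)).erase i, b k / (b k - b i)) *
        (Real.exp (-(b i) * t) * (-(b i)))) t := by
    unfold kerK
    apply HasDerivAt.fun_sum
    intro i _
    apply HasDerivAt.const_mul
    apply HasDerivAt.exp
    simpa using (hasDerivAt_mul_const (-(b i)) (x := t)).congr_of_eventuallyEq
      (Filter.Eventually.of_forall fun y => mul_comm (-(b i)) y)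
  convert h using 1
  unfold kerK
  have hI : Finset.Icc 1 (j+1) = insert (j+1) (Finset.Icc 1 j) := by
    ext x; simp only [Finset.mem_Icc, Finset.mem_insert]; omega
  have hn : j + 1 ∉ Finset.Icc 1 j := by simp
  rw [hI, Finset.sum_insert hn, Finset.sum_insert hn, ← hI]
  have key : ∀ i ∈ Finset.Icc 1 j, (b (j+1)) * (∏ k ∈ (Finset.Icc 1 j).erase i, b k / (b k - b i))
      = (b (j+1) - b i) * ∏ k ∈ (Finset.Icc 1 (j+1)).erase i, b k / (b k - b i) := by
    intro i hi
    have hi' := Finset.mem_Icc.1 hi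
    rw [hI, Finset.erase_insert_of_ne (by omega), Finset.prod_insert
      (by simp)]
    have : b (j+1) - b i ≠ 0 := sub_ne_zero.2
      (hbd _ (by simp) _ (by simp; omega) (by omega))
    field_simp
  rw [mul_sub, mul_add, Finset.mul_sum, Finset.mul_sum, sub_add_eq_sub_sub, sub_right_comm,
    ← Finset.sum_sub_distrib, sub_eq_add_neg, add_comm]
  congr 1
  · ring
  · apply Finset.sum_congr rfl
    intro i hi
    have := key i hi
    linear_combination (b i * Real.exp (-b i * t)) * this

lemma kerK_at_zero (b : ℕ → ℝ) (j : ℕ) (hj : 2 ≤ j)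
    (hbd : ∀ i ∈ Finset.Icc 1 j, ∀ k ∈ Finset.Icc 1 j, i ≠ k → b i ≠ b k) :
    kerK b j 0 = 0 := by
  have hinj : Set.InjOn b (Finset.Icc 1 j : Finset ℕ) := by
    intro i hi k hk h
    by_contra hne
    exact hbd i hi k hk hne h
  have hL := Lagrange.coeff_eq_sum hinj (P := (1 : Polynomial ℝ))
    (by rw [Polynomial.degree_one]; simp; omega)
  have hc : (1 : Polynomial ℝ).coeff (#(Finset.Icc 1 j) - 1) = 0 := by
    rw [Polynomial.coeff_one, if_neg]; simp; omega
  rw [hc] at hL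
  have h2 : kerK b j 0 = (-1) ^ (j - 1) * (∏ k ∈ Finset.Icc 1 j, b k) *
      ∑ i ∈ Finset.Icc 1 j, Polynomial.eval (b i) (1 : Polynomial ℝ) /
        ∏ k ∈ (Finset.Icc 1 j).erase i, (b i - b k) := by
    rw [kerK, Finset.mul_sum]
    apply Finset.sum_congr rfl
    intro i hi
    have hneg : ∏ k ∈ (Finset.Icc 1 j).erase i, (b k - b i)
        = (-1) ^ (j - 1) * ∏ k ∈ (Finset.Icc 1 j).erase i, (b i - b k) := by
      rw [show j - 1 = #((Finset.Icc 1 j).erase i) by rw [Finset.card_erase_of_mem hi]; simp,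
        ← Finset.prod_const, ← Finset.prod_mul_distrib]
      exact Finset.prod_congr rfl fun k _ => by ring
    rw [Finset.prod_div_distrib, hneg, ← Finset.mul_prod_erase _ _ hi]
    rcases neg_one_pow_eq_or ℝ (j - 1) with h | h <;> rw [h] <;> simp <;> ring
  rw [h2, ← hL, mul_zero]

lemma q_deriv (N : ℕ) (a b : ℕ → ℝ) 
    (Astar : Matrix (Fin (N + 1)) (Fin (N + 1)) ℝ)
    (hA : Astar = Matrix.of fun i j : Fin (N + 1) =>
      if (i : ℕ) = 0 ∧ (j : ℕ) = 0 then -(∑ k ∈ Finset.Icc 1 N, a k)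
      else if (i : ℕ) = 0 ∧ (j : ℕ) = 1 then b 1
      else if (j : ℕ) = 0 then a (i : ℕ)
      else if (i : ℕ) = (j : ℕ) then -(b (i : ℕ))
      else if (j : ℕ) = (i : ℕ) + 1 then b (j : ℕ)
      else 0) (q : ℕ → ℝ) (hq : q (N+1) = 0) (v : Fin (N+1) → ℝ) (hv : ∀ i, v i = q i)
      (i : Fin (N+1)) :
      Astar.mulVec v i = (if (i:ℕ) = 0 then -(∑ k ∈ Finset.Icc 1 N, a k) * q 0
        else a i * q 0 - b i * q i) + b (i+1) * q (i+1) := by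
  rw [Matrix.mulVec, dotProduct, hA]
  simp only [Matrix.of_apply, hv]
  rw [Fin.sum_univ_eq_sum_range (fun j : ℕ => (if (i : ℕ) = 0 ∧ j = 0 then -(∑ k ∈ Finset.Icc 1 N, a k)
      else if (i : ℕ) = 0 ∧ j = 1 then b 1
      else if j = 0 then a (i : ℕ)
      else if (i : ℕ) = j then -(b (i : ℕ))
      else if j = (i : ℕ) + 1 then b j
      else 0) * q j)]
  have h2 : ∑ j ∈ Finset.range (N+1), (if j = (i:ℕ)+1 then b (i+1) * q (i+1) else 0) =
      b (i+1) * q (i+1) := by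
    rw [Finset.sum_ite_eq']
    split_ifs with h
    · rfl
    · have : (i:ℕ) + 1 = N + 1 := by have := i.2; simp at h; omega
      rw [this, hq]; simp
  by_cases hi : (i:ℕ) = 0
  · rw [if_pos hi]
    have h1 : ∑ j ∈ Finset.range (N+1), (if j = 0 then -(∑ k ∈ Finset.Icc 1 N, a k) * q 0 else 0) =
      -(∑ k ∈ Finset.Icc 1 N, a k) * q 0 := by
      rw [Finset.sum_ite_eq']; simp
    rw [← h1, ← h2, ← Finset.sum_add_distrib]
    apply Finset.sum_congr rfl
    intro j _
    rw [hi]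
    rcases j with _ | _ | j <;> simp
  · rw [if_neg hi]
    have h1 : ∑ j ∈ Finset.range (N+1), (if j = 0 then a i * q 0 else 0) = a i * q 0 := by
      rw [Finset.sum_ite_eq']; simp
    have h3 : ∑ j ∈ Finset.range (N+1), (if j = (i:ℕ) then b i * q i else 0) = b i * q i := by
      rw [Finset.sum_ite_eq', if_pos (Finset.mem_range.2 i.2)]
    rw [← h1, ← h2, ← h3, ← Finset.sum_sub_distrib, ← Finset.sum_add_distrib]
    apply Finset.sum_congr rfl
    intro j _
    by_cases hj0 : j = 0
    · subst hj0; simp [hi, Ne.symm hi]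
    · by_cases hji : j = i
      · subst hji; simp [hi]
      · by_cases hj1 : j = i + 1
        · subst hj1; simp [hi]
        · simp [hi, hj0, hji, hj1, Ne.symm hji]

/-- **From Markov to Memory.**  The first component of the loop Markov process solves the
memory equation with kernel `K(t) = ∑ⱼ aⱼ Kⱼ(t)`, `Kⱼ(t) = ∑ᵢ bᵢ ψᵢʲ e^{−bᵢ t}`. -/
theorem stmt_0 (N : ℕ) (hN : 1 ≤ N) (a b : ℕ → ℝ) (u₀ : ℝ)
    (ha : ∀ j ∈ Finset.Icc 1 N, 0 ≤ a j)
    (hb : ∀ j ∈ Finset.Icc 1 N, 0 < b j)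
    (hbd : ∀ i ∈ Finset.Icc 1 N, ∀ j ∈ Finset.Icc 1 N, i ≠ j → b i ≠ b j)
    (Astar : Matrix (Fin (N + 1)) (Fin (N + 1)) ℝ)
    (hA : Astar = Matrix.of fun i j : Fin (N + 1) =>
      if (i : ℕ) = 0 ∧ (j : ℕ) = 0 then -(∑ k ∈ Finset.Icc 1 N, a k)
      else if (i : ℕ) = 0 ∧ (j : ℕ) = 1 then b 1
      else if (j : ℕ) = 0 then a (i : ℕ)
      else if (i : ℕ) = (j : ℕ) then -(b (i : ℕ))
      else if (j : ℕ) = (i : ℕ) + 1 then b (j : ℕ)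
      else 0)
    (p : ℝ → Fin (N + 1) → ℝ)
    (hp : ∀ t : ℝ, 0 ≤ t → HasDerivAt p (Astar.mulVec (p t)) t)
    (hp0 : p 0 = fun i : Fin (N + 1) => if (i : ℕ) = 0 then u₀ else 0)
    (K : ℝ → ℝ)
    (hK : K = fun t => ∑ j ∈ Finset.Icc 1 N, a j *
      ∑ i ∈ Finset.Icc 1 j, b i * (∏ k ∈ (Finset.Icc 1 j).erase i, b k / (b k - b i)) *
        Real.exp (-(b i) * t)) :
    p 0 0 = u₀ ∧ ∀ t : ℝ, 0 ≤ t →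
      HasDerivAt (fun s => p s 0)
        (-(∑ k ∈ Finset.Icc 1 N, a k) * p t 0 + ∫ s in (0:ℝ)..t, K (t - s) * p s 0) t := by
  have hp0' : p 0 0 = u₀ := by rw [hp0]; simp
  refine ⟨hp0', ?_⟩
  intro t ht
  let q : ℕ → ℝ → ℝ := fun n s => if h : n < N + 1 then p s ⟨n, h⟩ else 0
  have hqp : ∀ s (i : Fin (N+1)), p s i = q i s := by
    intro s i; simp only [q, dif_pos i.2]
  have hqN : ∀ s, q (N+1) s = 0 := by intro s; simp [q]
  have hpd : ∀ s, 0 ≤ s → ∀ i : Fin (N+1), HasDerivAt (fun s => p s i)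
      ((if (i:ℕ) = 0 then -(∑ k ∈ Finset.Icc 1 N, a k) * q 0 s
        else a i * q 0 s - b i * q i s) + b (i+1) * q (i+1) s) s := by
    intro s hs i
    rw [← q_deriv N a b Astar hA (fun n => q n s) (hqN s) (p s) (hqp s) i]
    exact (hasDerivAt_pi.1 (hp s hs)) i
  have hqd : ∀ s, 0 ≤ s → ∀ j < N, HasDerivAt (q (j+1))
      (a (j+1) * q 0 s - b (j+1) * q (j+1) s + b (j+2) * q (j+2) s) s := by
    intro s hs j hj
    have h := hpd s hs ⟨j+1, by omega⟩
    simpa [hqp] using h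
  have hKe : ∀ x, K x = ∑ j ∈ Finset.range N, a (j+1) * kerK b (j+1) x := by
    intro x
    rw [hK, Finset.range_eq_Ico, Finset.sum_Ico_add' (fun j => a j * kerK b j x) 0 N 1]
    rfl
  have hkd : ∀ j < N, ∀ x, HasDerivAt (kerK b (j+1))
      (b (j+1) * (kerK b j x - kerK b (j+1) x)) x := by
    intro j hj x
    apply kerK_deriv
    intro i hi k hk
    simp only [Finset.mem_Icc] at hi hk
    exact hbd i (Finset.mem_Icc.2 (by omega)) k (Finset.mem_Icc.2 (by omega))
  have hG : ∀ s, 0 ≤ s → HasDerivAt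
      (fun s => ∑ j ∈ Finset.range N, kerK b (j+1) (t - s) * q (j+1) s) (K (t - s) * p s 0) s := by
    intro s hs
    have h1 : HasDerivAt
      (fun s => ∑ j ∈ Finset.range N, kerK b (j+1) (t - s) * q (j+1) s)
      (∑ j ∈ Finset.range N, (-(b (j+1) * (kerK b j (t-s) - kerK b (j+1) (t-s))) * q (j+1) s
        + kerK b (j+1) (t-s) *
          (a (j+1) * q 0 s - b (j+1) * q (j+1) s + b (j+2) * q (j+2) s))) s := by
      apply HasDerivAt.fun_sum
      intro j hj
      have hj := Finset.mem_range.1 hj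
      refine HasDerivAt.mul ?_ (hqd s hs j hj)
      have := (hkd j hj (t - s)).comp s ((hasDerivAt_id s).const_sub t)
      simpa [Function.comp_def] using this
    convert h1 using 1
    have h2 := Finset.sum_range_sub (fun j => kerK b j (t-s) * (b (j+1) * q (j+1) s)) N
    rw [hqN, kerK_zero] at h2
    have h3 : p s 0 = q 0 s := by simpa using hqp s 0
    rw [hKe, h3, Finset.sum_mul]
    rw [← add_zero (∑ j ∈ Finset.range N, _)]
    have h4 : (0:ℝ) = kerK b N (t-s) * (b (N+1) * 0) - 0 * (b (0+1) * q (0+1) s) := by ring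
    rw [h4, ← h2, ← Finset.sum_add_distrib]
    apply Finset.sum_congr rfl
    intro j _
    ring
  have hcK : Continuous K := by rw [hK]; fun_prop
  have hint : IntervalIntegrable (fun s => K (t - s) * p s 0) volume 0 t := by
    apply ContinuousOn.intervalIntegrable
    rw [Set.uIcc_of_le ht]
    apply ContinuousOn.mul
    · exact (hcK.comp (continuous_const.sub continuous_id)).continuousOn
    · intro s hs
      exact (hpd s hs.1 0).continuousAt.continuousWithinAt
  have hftc := intervalIntegral.integral_eq_sub_of_hasDerivAt (a := 0) (b := t)
    (fun s hs => hG s (by rw [Set.uIcc_of_le ht] at hs; exact hs.1)) hint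
  have hz : ∑ j ∈ Finset.range N, kerK b (j+1) (t - 0) * q (j+1) 0 = 0 := by
    apply Finset.sum_eq_zero
    intro j hj
    have hj := Finset.mem_range.1 hj
    have : q (j+1) 0 = 0 := by simp [q, hp0]
    rw [this, mul_zero]
  have ht' : ∑ j ∈ Finset.range N, kerK b (j+1) (t - t) * q (j+1) t = b 1 * q 1 t := by
    rw [Finset.sum_eq_single_of_mem 0 (Finset.mem_range.2 (by omega))]
    · rw [sub_self, zero_add, kerK_one_zero]
    · intro j hj hj0
      have hj := Finset.mem_range.1 hj
      rw [sub_self, kerK_at_zero b (j+1) (by omega), zero_mul]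
      intro i hi k hk
      simp only [Finset.mem_Icc] at hi hk
      exact hbd i (Finset.mem_Icc.2 (by omega)) k (Finset.mem_Icc.2 (by omega))
  rw [hftc, hz, ht', sub_zero]
  have h := hpd t ht 0
  have h3 : p t 0 = q 0 t := by simpa using hqp t 0
  rw [h3]
  simpa using h
end

section
/- Let j ≥ 1 and let b_1,…,b_j > 0 be pairwise distinct. Then the kernel K_j(t) = Σ_{i=1}^j b_i ψ_i^j e^{−b_i t} satisfies K_j(t) ≥ 0 for all t ≥ 0, even though the coefficients b_i ψ_i^j may be negative. -/
open Finset

theorem divdiff_zero (b : ℕ → ℝ) (s : Finset ℕ) (hs : 1 < s.card) (hi : Set.InjOn b s) :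
    ∑ i ∈ s, 1 / ∏ k ∈ s.erase i, (b k - b i) = 0 := by
  have hv : Set.InjOn (fun i => - b i) s := fun x hx y hy h => hi hx hy (neg_injective h)
  have h := Lagrange.coeff_eq_sum hv (P := (1 : Polynomial ℝ))
    (by rw [Polynomial.degree_one]; exact_mod_cast (by omega : 0 < s.card))
  rw [Polynomial.coeff_one, if_neg (by omega)] at h
  rw [h]
  refine Finset.sum_congr rfl fun i _ => ?_
  rw [Polynomial.eval_one]
  congr 1
  exact Finset.prod_congr rfl fun k _ => by ring

theorem divdiff_nonneg (b : ℕ → ℝ) (s : Finset ℕ) : Set.InjOn b s → ∀ t : ℝ, 0 ≤ t →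
    0 ≤ ∑ i ∈ s, Real.exp (-(b i) * t) / ∏ k ∈ s.erase i, (b k - b i) := by
  induction s using Finset.induction_on with
  | empty => intro _ t _; simp
  | insert a s ha ih =>
    intro hi t ht
    rcases s.eq_empty_or_nonempty with rfl | hne
    · simp; positivity
    have hi' : Set.InjOn b s := hi.mono (by simp)
    set S := insert a s with hS
    let c : ℕ → ℝ := fun i => ∏ k ∈ S.erase i, (b k - b i)
    let G : ℝ → ℝ := fun t => ∑ i ∈ S, Real.exp ((b a - b i) * t) / c i
    have hd : ∀ x, HasDerivAt G (∑ i ∈ S, (Real.exp ((b a - b i) * x) * (b a - b i)) / c i) x := by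
      intro x
      refine HasDerivAt.fun_sum fun i _ => HasDerivAt.div_const ?_ _
      have := ((hasDerivAt_id x).const_mul (b a - b i)).exp
      simpa using this
    have hG0 : G 0 = 0 := by
      have := divdiff_zero b S (by
        rw [hS, card_insert_of_notMem ha]; have := hne.card_pos; omega) hi
      simpa [G, c] using this
    have hmono : MonotoneOn G (Set.Ici 0) := by
      refine monotoneOn_of_deriv_nonneg (convex_Ici 0)
        (fun x _ => (hd x).continuousAt.continuousWithinAt)
        (fun x _ => (hd x).differentiableAt.differentiableWithinAt) fun x hx => ?_
      rw [interior_Ici] at hx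
      rw [(hd x).deriv, hS, sum_insert ha]
      have h1 := mul_nonneg (Real.exp_pos (b a * x)).le (ih hi' x (le_of_lt hx))
      rw [mul_sum] at h1
      have : ∀ i ∈ s, (Real.exp ((b a - b i) * x) * (b a - b i)) / c i =
          Real.exp (b a * x) * (Real.exp (-(b i) * x) / ∏ k ∈ s.erase i, (b k - b i)) := by
        intro i his
        have hai : a ≠ i := fun h => ha (h ▸ his)
        have hne' : b a - b i ≠ 0 := by
          intro h
          exact hai (hi (by simp [hS]) (by simp [hS, his]) (sub_eq_zero.mp h))
        have hc : c i = (b a - b i) * ∏ k ∈ s.erase i, (b k - b i) := by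
          simp only [c, hS]
          rw [erase_insert_of_ne hai, prod_insert (by simp [ha])]
        rw [hc, mul_comm (Real.exp _), mul_div_mul_left _ _ hne', ← mul_div_assoc, ← Real.exp_add]
        congr 2; ring
      rw [sum_congr rfl this]
      simpa using h1
    have h2 := hmono (Set.mem_Ici.2 le_rfl) (Set.mem_Ici.2 ht) ht
    rw [hG0] at h2
    have h3 := mul_nonneg (Real.exp_pos (-(b a) * t)).le h2
    simp only [G] at h3
    rw [mul_sum] at h3
    refine h3.trans_eq (sum_congr rfl fun i _ => ?_)
    rw [← mul_div_assoc, ← Real.exp_add]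
    congr 2; ring

/-- **Positivity of the loop kernels.**  For pairwise distinct positive rates `b₁,…,b_j`, the
kernel `K_j(t) = ∑ᵢ bᵢ ψᵢʲ e^{−bᵢ t}` is nonnegative for `t ≥ 0`. -/
theorem stmt_1 (j : ℕ) (hj : 1 ≤ j) (b : ℕ → ℝ)
    (hb : ∀ i ∈ Finset.Icc 1 j, 0 < b i)
    (hbd : ∀ i ∈ Finset.Icc 1 j, ∀ k ∈ Finset.Icc 1 j, i ≠ k → b i ≠ b k)
    (t : ℝ) (ht : 0 ≤ t) :
    0 ≤ ∑ i ∈ Finset.Icc 1 j, b i * (∏ k ∈ (Finset.Icc 1 j).erase i, b k / (b k - b i)) *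
      Real.exp (-(b i) * t) := by
  have h := divdiff_nonneg b (Finset.Icc 1 j)
    (fun x hx y hy h => by_contra fun hne => hbd x hx y hy hne h) t ht
  have h1 := mul_nonneg (prod_nonneg fun i hi => (hb i hi).le) h
  rw [mul_sum] at h1
  refine h1.trans_eq (sum_congr rfl fun i hi => ?_)
  rw [prod_div_distrib, ← mul_div_assoc, ← mul_div_assoc, mul_prod_erase _ _ hi]
  ring
end

section
/- Let N ≥ 1, let a_1,…,a_N ≥ 0, let b_1,…,b_N > 0, set a = Σ_{j=1}^N a_j, and let u_0 ∈ ℝ. Define Z = 1 + Σ_{i=1}^N (1/b_i)·Σ_{j=i}^N a_j and the vector μ ∈ ℝ^{N+1} by μ = (u_0/Z)·(1, (a_1+⋯+a_N)/b_1, (a_2+⋯+a_N)/b_2, …, a_N/b_N). Then A* μ = 0 and Σ_{i=0}^N μ_i = u_0; i.e., μ is a stationary vector of total mass u_0 for the loop Markov generator. -/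
open Finset

/-- **Stationary state of the loop Markov generator.**  The explicitly given vector `μ`
satisfies `A* μ = 0` and has total mass `u₀`. -/
theorem stmt_2 (N : ℕ) (hN : 1 ≤ N) (a b : ℕ → ℝ) (u₀ : ℝ)
    (ha : ∀ j ∈ Finset.Icc 1 N, 0 ≤ a j)
    (hb : ∀ j ∈ Finset.Icc 1 N, 0 < b j)
    (Astar : Matrix (Fin (N + 1)) (Fin (N + 1)) ℝ)
    (hA : Astar = Matrix.of fun i j : Fin (N + 1) =>
      if (i : ℕ) = 0 ∧ (j : ℕ) = 0 then -(∑ k ∈ Finset.Icc 1 N, a k)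
      else if (i : ℕ) = 0 ∧ (j : ℕ) = 1 then b 1
      else if (j : ℕ) = 0 then a (i : ℕ)
      else if (i : ℕ) = (j : ℕ) then -(b (i : ℕ))
      else if (j : ℕ) = (i : ℕ) + 1 then b (j : ℕ)
      else 0)
    (Z : ℝ)
    (hZ : Z = 1 + ∑ i ∈ Finset.Icc 1 N, (1 / b i) * ∑ j ∈ Finset.Icc i N, a j)
    (μ : Fin (N + 1) → ℝ)
    (hμ : μ = fun i : Fin (N + 1) =>
      u₀ / Z * (if (i : ℕ) = 0 then 1 else (∑ j ∈ Finset.Icc (i : ℕ) N, a j) / b (i : ℕ))) :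
    Astar.mulVec μ = 0 ∧ ∑ i : Fin (N + 1), μ i = u₀ := by
  have hZpos : 0 < Z := by
    rw [hZ]
    have : 0 ≤ ∑ i ∈ Finset.Icc 1 N, (1 / b i) * ∑ j ∈ Finset.Icc i N, a j := by
      refine Finset.sum_nonneg fun i hi => mul_nonneg (one_div_nonneg.2 (hb i hi).le) ?_
      refine Finset.sum_nonneg fun j hj => ha j ?_
      simp only [Finset.mem_Icc] at hi hj ⊢
      omega
    linarith
  constructor
  · ext i
    obtain ⟨i, hi⟩ := i
    set S : ℕ → ℝ := fun k => ∑ j ∈ Finset.Icc k N, a j with hS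
    have hS' : ∀ k, ∑ j ∈ Finset.Icc k N, a j = S k := fun k => rfl
    have hrec : ∀ k, k ≤ N → S k = a k + S (k + 1) := by
      intro k hk
      rw [hS]
      simp only
      rw [← Finset.add_sum_Ioc_eq_sum_Icc hk]
      congr 2
      ext x
      simp only [Finset.mem_Ioc, Finset.mem_Icc]
      omega
    have hlast : S (N + 1) = 0 := by simp [hS]
    have key : ∀ j : Fin (N + 1), Astar ⟨i, hi⟩ j * μ j =
        (fun j : ℕ => (if j = 0 then u₀ / Z * (if i = 0 then - S 1 else a i) else 0)
        + (if j = i then (if i = 0 then 0 else - (u₀ / Z * S i)) else 0)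
        + (if j = i + 1 then u₀ / Z * S (i + 1) else 0)) (j : ℕ) := by
      rintro ⟨j, hj⟩
      rw [hA, hμ]
      simp only [Matrix.of_apply, hS']
      by_cases hj0 : j = 0
      · subst hj0
        by_cases hi0 : i = 0
        · subst hi0
          simp
          ring
        · have : ¬ (0 = i) := fun h => hi0 h.symm
          simp [hi0, this]
          ring
      · have hbj : b j ≠ 0 := (hb j (by simp only [Finset.mem_Icc]; omega)).ne'
        by_cases hji : j = i
        · subst hji
          simp [hj0]
          field_simp
        · have hij : ¬ (i = j) := fun h => hji h.symm
          by_cases hj1 : j = i + 1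
          · subst hj1
            by_cases hi0 : i = 0
            · subst hi0
              simp at hbj ⊢
              field_simp
            · simp [hi0]
              field_simp
          · have : ¬ (i = 0 ∧ j = 1) := by omega
            simp [hj0, hji, hij, hj1, this]
    simp only [Matrix.mulVec, dotProduct, Pi.zero_apply]
    rw [Finset.sum_congr rfl fun j _ => key j]
    rw [Fin.sum_univ_eq_sum_range (fun j : ℕ =>
        (if j = 0 then u₀ / Z * (if i = 0 then - S 1 else a i) else 0)
        + (if j = i then (if i = 0 then 0 else - (u₀ / Z * S i)) else 0)
        + (if j = i + 1 then u₀ / Z * S (i + 1) else 0)) (N + 1)]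
    simp only [Finset.sum_add_distrib, Finset.sum_ite_eq', Finset.mem_range]
    have h1 : (if i + 1 < N + 1 then u₀ / Z * S (i + 1) else 0) = u₀ / Z * S (i + 1) := by
      split_ifs with h
      · rfl
      · have : i = N := by omega
        rw [this, hlast, mul_zero]
    rw [h1, if_pos hi, if_pos (Nat.succ_pos N)]
    by_cases hi0 : i = 0
    · subst hi0
      simp
    · rw [if_neg hi0, if_neg hi0, hrec i (by omega)]
      ring
  · rw [hμ]
    rw [← Finset.mul_sum, Fin.sum_univ_succ]
    simp only [Fin.val_zero, if_true, Fin.val_succ, Nat.succ_ne_zero, if_false]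
    rw [Fin.sum_univ_eq_sum_range (fun i => (∑ j ∈ Finset.Icc (i + 1) N, a j) / b (i + 1)) N]
    have : ∑ i ∈ Finset.range N, (∑ j ∈ Finset.Icc (i + 1) N, a j) / b (i + 1)
        = ∑ i ∈ Finset.Icc 1 N, (1 / b i) * ∑ j ∈ Finset.Icc i N, a j := by
      rw [Finset.range_eq_Ico,
        Finset.sum_Ico_add' (fun i => (∑ j ∈ Finset.Icc i N, a j) / b i) 0 N 1]
      refine Finset.sum_congr ?_ fun i _ => by ring
      ext i
      simp only [Finset.mem_Ico, Finset.mem_Icc]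
      omega
    rw [this, ← hZ]
    field_simp
end

section
/- Let N ≥ 1, let a_1,…,a_N ≥ 0, let b_1,…,b_N > 0 be pairwise distinct, set a = Σ_{j=1}^N a_j, and let u : [0,∞) → ℝ be differentiable with u'(t) = −a·u(t) + ∫_0^t K(t−s)·u(s) ds for all t ≥ 0 and u(0) = u_0. Then u(t) converges as t → ∞ to u_∞ = u_0/Z, where Z = 1 + Σ_{i=1}^N (1/b_i)·Σ_{j=i}^N a_j. -/
open MeasureTheory Finset

lemma aux_tele (N : ℕ) (a g : ℕ → ℝ) :
    ∑ i ∈ Finset.Icc 1 N, (∑ j ∈ Finset.Icc i N, a j) * (g (i - 1) - g i)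
      = ∑ j ∈ Finset.Icc 1 N, a j * (g 0 - g j) := by
  have htel : ∀ j : ℕ, ∑ i ∈ Finset.Icc 1 j, (g (i - 1) - g i) = g 0 - g j := by
    intro j
    induction j with
    | zero => simp
    | succ n ih => rw [Finset.sum_Icc_succ_top (by omega), ih]; simp
  simp_rw [← htel, Finset.sum_mul, Finset.mul_sum]
  apply Finset.sum_comm'
  intro i j
  simp only [Finset.mem_Icc]
  omega

lemma aux_poincare (N : ℕ) (a b x : ℕ → ℝ)
    (ha : ∀ j ∈ Finset.Icc 1 N, 0 ≤ a j) (hb : ∀ j ∈ Finset.Icc 1 N, 0 < b j) :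
    ∑ i ∈ Finset.Icc 1 N, (1 / b i) * (∑ j ∈ Finset.Icc i N, a j) * (x i - x 0) ^ 2
      ≤ (∑ i ∈ Finset.Icc 1 N, N / b i) *
        ∑ i ∈ Finset.Icc 1 N, (∑ j ∈ Finset.Icc i N, a j) * (x (i - 1) - x i) ^ 2 := by
  have htel : ∀ j : ℕ, ∑ i ∈ Finset.Icc 1 j, (x (i - 1) - x i) = x 0 - x j := by
    intro j
    induction j with
    | zero => simp
    | succ n ih => rw [Finset.sum_Icc_succ_top (by omega), ih]; simp
  have hA : ∀ i, 1 ≤ i → 0 ≤ ∑ j ∈ Finset.Icc i N, a j := by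
    intro i hi
    apply Finset.sum_nonneg
    intro j hj
    apply ha
    simp only [Finset.mem_Icc] at hj ⊢
    omega
  rw [Finset.sum_mul]
  apply Finset.sum_le_sum
  intro i hi
  have hbi := hb i hi
  rw [Finset.mem_Icc] at hi
  have h1 : (x i - x 0) ^ 2 ≤ N * ∑ k ∈ Finset.Icc 1 i, (x (k - 1) - x k) ^ 2 := by
    have h := sq_sum_le_card_mul_sum_sq (s := Finset.Icc 1 i) (f := fun k => x (k - 1) - x k)
    rw [htel] at h
    have h2 : ((Finset.Icc 1 i).card : ℝ) ≤ N := by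
      simp only [Nat.card_Icc]
      exact_mod_cast (by omega : i + 1 - 1 ≤ N)
    calc (x i - x 0) ^ 2 = (x 0 - x i) ^ 2 := by ring
      _ ≤ _ := h
      _ ≤ _ := mul_le_mul_of_nonneg_right h2 (Finset.sum_nonneg fun _ _ => sq_nonneg _)
  have h3 : (∑ j ∈ Finset.Icc i N, a j) * ∑ k ∈ Finset.Icc 1 i, (x (k - 1) - x k) ^ 2
      ≤ ∑ k ∈ Finset.Icc 1 N, (∑ j ∈ Finset.Icc k N, a j) * (x (k - 1) - x k) ^ 2 := by
    rw [Finset.mul_sum]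
    calc _ ≤ ∑ k ∈ Finset.Icc 1 i, (∑ j ∈ Finset.Icc k N, a j) * (x (k - 1) - x k) ^ 2 := by
          apply Finset.sum_le_sum
          intro k hk
          rw [Finset.mem_Icc] at hk
          apply mul_le_mul_of_nonneg_right _ (sq_nonneg _)
          apply Finset.sum_le_sum_of_subset_of_nonneg
          · exact Finset.Icc_subset_Icc_left hk.2
          · intro j hj _
            apply ha
            simp only [Finset.mem_Icc] at hj ⊢
            omega
      _ ≤ _ := by
          apply Finset.sum_le_sum_of_subset_of_nonneg
          · exact Finset.Icc_subset_Icc_right hi.2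
          · intro j hj _
            rw [Finset.mem_Icc] at hj
            exact mul_nonneg (hA j hj.1) (sq_nonneg _)
  have hAi := hA i hi.1
  calc (1 / b i) * (∑ j ∈ Finset.Icc i N, a j) * (x i - x 0) ^ 2
      ≤ (1 / b i) * (∑ j ∈ Finset.Icc i N, a j) *
        (N * ∑ k ∈ Finset.Icc 1 i, (x (k - 1) - x k) ^ 2) :=
        mul_le_mul_of_nonneg_left h1 (mul_nonneg (by positivity) hAi)
    _ = (N / b i) * ((∑ j ∈ Finset.Icc i N, a j) *
        ∑ k ∈ Finset.Icc 1 i, (x (k - 1) - x k) ^ 2) := by ring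
    _ ≤ _ := mul_le_mul_of_nonneg_left h3 (by positivity)

/-- The chain of linear ODEs converges. -/
lemma aux_chain (N : ℕ) (hN : 1 ≤ N) (a b : ℕ → ℝ) (u₀ : ℝ)
    (ha : ∀ j ∈ Finset.Icc 1 N, 0 ≤ a j)
    (hb : ∀ j ∈ Finset.Icc 1 N, 0 < b j)
    (x : ℕ → ℝ → ℝ)
    (hx0 : ∀ t : ℝ, 0 ≤ t → HasDerivAt (x 0) (∑ j ∈ Finset.Icc 1 N, a j * (x j t - x 0 t)) t)
    (hx : ∀ j ∈ Finset.Icc 1 N, ∀ t : ℝ, 0 ≤ t →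
      HasDerivAt (x j) (b j * (x (j - 1) t - x j t)) t)
    (hi0 : x 0 0 = u₀) (hi : ∀ j ∈ Finset.Icc 1 N, x j 0 = 0)
    (Z : ℝ)
    (hZ : Z = 1 + ∑ i ∈ Finset.Icc 1 N, (1 / b i) * ∑ j ∈ Finset.Icc i N, a j) :
    Filter.Tendsto (x 0) Filter.atTop (nhds (u₀ / Z)) := by
  have hA : ∀ i, 1 ≤ i → 0 ≤ ∑ j ∈ Finset.Icc i N, a j := by
    intro i hi
    apply Finset.sum_nonneg
    intro j hj
    apply ha
    simp only [Finset.mem_Icc] at hj ⊢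
    omega
  set A : ℕ → ℝ := fun i => ∑ j ∈ Finset.Icc i N, a j with hAdef
  have hZpos : 0 < Z := by
    rw [hZ]
    have : 0 ≤ ∑ i ∈ Finset.Icc 1 N, (1 / b i) * ∑ j ∈ Finset.Icc i N, a j := by
      apply Finset.sum_nonneg
      intro i hi
      have := hb i hi
      exact mul_nonneg (by positivity) (hA i (Finset.mem_Icc.1 hi).1)
    linarith
  -- conserved quantity
  have hcons : ∀ t : ℝ, 0 ≤ t →
      x 0 t + ∑ i ∈ Finset.Icc 1 N, (1 / b i) * A i * x i t = u₀ := by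
    intro t ht
    have hd : ∀ s : ℝ, 0 ≤ s →
        HasDerivAt (fun t => x 0 t + ∑ i ∈ Finset.Icc 1 N, (1 / b i) * A i * x i t) 0 s := by
      intro s hs
      have h1 := (hx0 s hs).add (HasDerivAt.fun_sum (u := Finset.Icc 1 N)
        (fun i hi => (hx i hi s hs).const_mul ((1 / b i) * A i)))
      refine h1.congr_deriv ?_
      have h2 := aux_tele N a (fun i => x i s)
      have h3 : ∑ i ∈ Finset.Icc 1 N, 1 / b i * A i * (b i * (x (i - 1) s - x i s))
          = ∑ i ∈ Finset.Icc 1 N, A i * (x (i - 1) s - x i s) := by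
        apply Finset.sum_congr rfl
        intro i hi
        have := (hb i hi).ne'
        field_simp
      rw [h3, h2, ← Finset.sum_add_distrib]
      apply Finset.sum_eq_zero
      intro i _
      ring
    have h := constant_of_has_deriv_right_zero (a := 0) (b := t)
      (fun s hs => (hd s hs.1).continuousAt.continuousWithinAt)
      (fun s hs => (hd s hs.1).hasDerivWithinAt) t ⟨ht, le_refl t⟩
    rw [h, hi0, Finset.sum_eq_zero, add_zero]
    intro i hi'
    rw [hi i hi', mul_zero]
  set c : ℝ := u₀ / Z with hc
  have hcZ : Z * c = u₀ := by rw [hc]; field_simp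
  set W : ℝ → ℝ := fun t =>
    (x 0 t - c) ^ 2 + ∑ i ∈ Finset.Icc 1 N, (1 / b i) * A i * (x i t - c) ^ 2 with hW
  set D : ℝ → ℝ := fun t => ∑ i ∈ Finset.Icc 1 N, A i * (x (i - 1) t - x i t) ^ 2 with hD
  set C : ℝ := ∑ i ∈ Finset.Icc 1 N, N / b i with hC
  have hCpos : 0 < C := by
    apply Finset.sum_pos
    · intro i hi
      have := hb i hi
      have : (0:ℝ) < N := by exact_mod_cast hN
      positivity
    · exact ⟨1, Finset.mem_Icc.2 ⟨le_refl _, hN⟩⟩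
  have hWD : ∀ t : ℝ, 0 ≤ t → W t ≤ C * D t := by
    intro t ht
    have h1 := aux_poincare N a b (fun i => x i t) ha hb
    have h2 := hcons t ht
    have h3 : ∑ i ∈ Finset.Icc 1 N, (1 / b i) * A i * (x i t - x 0 t) ^ 2
        = W t + Z * (x 0 t - c) ^ 2 := by
      have e1 : ∑ i ∈ Finset.Icc 1 N, (1 / b i) * A i * (x i t - x 0 t) ^ 2
          = ∑ i ∈ Finset.Icc 1 N, (1 / b i) * A i * (x i t - c) ^ 2
            + 2 * (c - x 0 t) * (∑ i ∈ Finset.Icc 1 N, (1 / b i) * A i * x i t)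
            - (2 * c * (c - x 0 t) - (c - x 0 t) ^ 2) *
              ∑ i ∈ Finset.Icc 1 N, (1 / b i) * A i := by
        rw [Finset.mul_sum, Finset.mul_sum, ← Finset.sum_add_distrib, ← Finset.sum_sub_distrib]
        apply Finset.sum_congr rfl
        intro i _
        ring
      have e2 : ∑ i ∈ Finset.Icc 1 N, (1 / b i) * A i = Z - 1 := by rw [hZ]; ring
      have e3 : ∑ i ∈ Finset.Icc 1 N, (1 / b i) * A i * x i t = Z * c - x 0 t := by
        rw [hcZ]; linarith
      rw [e1, e2, e3, hW]
      ring
    have h4 : 0 ≤ Z * (x 0 t - c) ^ 2 := by positivity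
    have h5 : W t + Z * (x 0 t - c) ^ 2 ≤ C * D t := by rw [← h3]; exact h1
    linarith
  have hWd : ∀ t : ℝ, 0 ≤ t → ∃ w, w ≤ - D t ∧ HasDerivAt W w t := by
    intro t ht
    have h1 := (((hx0 t ht).sub_const c).pow 2).add (HasDerivAt.fun_sum (u := Finset.Icc 1 N)
        (fun i hi => (((hx i hi t ht).sub_const c).pow 2).const_mul ((1 / b i) * A i)))
    refine ⟨_, ?_, h1⟩
    have h2 := aux_tele N a (fun i => (x i t - c) ^ 2)
    have h3 : ∀ i ∈ Finset.Icc 1 N,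
        1 / b i * A i * (((2:ℕ):ℝ) * (x i t - c) ^ (2 - 1) * (b i * (x (i - 1) t - x i t)))
          = A i * ((x (i - 1) t - c) ^ 2 - (x i t - c) ^ 2) - A i * (x (i - 1) t - x i t) ^ 2 := by
      intro i hi
      have := (hb i hi).ne'
      field_simp
      push_cast
      ring
    rw [Finset.sum_congr rfl h3, Finset.sum_sub_distrib, h2]
    have h4 : ((2:ℕ):ℝ) * (x 0 t - c) ^ (2 - 1) * (∑ j ∈ Finset.Icc 1 N, a j * (x j t - x 0 t))
        + ∑ j ∈ Finset.Icc 1 N, a j * ((x 0 t - c) ^ 2 - (x j t - c) ^ 2)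
        = - ∑ j ∈ Finset.Icc 1 N, a j * (x j t - x 0 t) ^ 2 := by
      rw [Finset.mul_sum, ← Finset.sum_add_distrib, ← Finset.sum_neg_distrib]
      apply Finset.sum_congr rfl
      intro i _
      push_cast
      ring
    have h5 : 0 ≤ ∑ j ∈ Finset.Icc 1 N, a j * (x j t - x 0 t) ^ 2 :=
      Finset.sum_nonneg fun j hj => mul_nonneg (ha j hj) (sq_nonneg _)
    have h6 : D t = ∑ i ∈ Finset.Icc 1 N, A i * (x (i - 1) t - x i t) ^ 2 := rfl
    linarith
  have hG : ∀ t : ℝ, 0 ≤ t → ∃ w, w ≤ 0 ∧ HasDerivAt (fun t => W t * Real.exp (t / C)) w t := by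
    intro t ht
    obtain ⟨w, hw, hdw⟩ := hWd t ht
    refine ⟨_, ?_, hdw.mul (((hasDerivAt_id t).div_const C).exp)⟩
    have h1 := hWD t ht
    have h2 : W t / C ≤ D t := by rw [div_le_iff₀ hCpos]; linarith
    have h3 : w + W t / C ≤ 0 := by linarith
    have h4 := Real.exp_pos (t / C)
    calc _ = (w + W t / C) * Real.exp (t / C) := by simp only [id]; ring
      _ ≤ 0 := mul_nonpos_of_nonpos_of_nonneg h3 h4.le
  have hanti : AntitoneOn (fun t => W t * Real.exp (t / C)) (Set.Ici 0) := by
    apply antitoneOn_of_deriv_nonpos (convex_Ici 0)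
    · intro t ht
      obtain ⟨w, _, h⟩ := hG t ht
      exact h.continuousAt.continuousWithinAt
    · intro t ht
      obtain ⟨w, _, h⟩ := hG t (interior_subset ht)
      exact h.differentiableAt.differentiableWithinAt
    · intro t ht
      obtain ⟨w, hw, h⟩ := hG t (interior_subset ht)
      rw [h.deriv]; exact hw
  have hbound : ∀ t : ℝ, 0 ≤ t → (x 0 t - c) ^ 2 ≤ W 0 * Real.exp (-(t / C)) := by
    intro t ht
    have h1 := hanti (Set.mem_Ici.2 (le_refl 0)) (Set.mem_Ici.2 ht) ht
    simp only [zero_div, Real.exp_zero, mul_one] at h1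
    have h2 : (x 0 t - c) ^ 2 ≤ W t := by
      have : 0 ≤ ∑ i ∈ Finset.Icc 1 N, (1 / b i) * A i * (x i t - c) ^ 2 := by
        apply Finset.sum_nonneg
        intro i hi
        have := hb i hi
        exact mul_nonneg (mul_nonneg (by positivity) (hA i (Finset.mem_Icc.1 hi).1)) (sq_nonneg _)
      simp only [hW]
      linarith
    rw [Real.exp_neg, ← div_eq_mul_inv, le_div_iff₀ (Real.exp_pos _)]
    exact le_trans (mul_le_mul_of_nonneg_right h2 (Real.exp_pos _).le) h1
  have hlim : Filter.Tendsto (fun t => W 0 * Real.exp (-(t / C))) Filter.atTop (nhds 0) := by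
    have h1 : Filter.Tendsto (fun t : ℝ => t / C) Filter.atTop Filter.atTop :=
      Filter.tendsto_id.atTop_div_const hCpos
    have h2 := (Real.tendsto_exp_neg_atTop_nhds_zero.comp h1).const_mul (W 0)
    simpa using h2
  have hsq : Filter.Tendsto (fun t => (x 0 t - c) ^ 2) Filter.atTop (nhds 0) := by
    refine tendsto_of_tendsto_of_tendsto_of_le_of_le' tendsto_const_nhds hlim
      (Filter.Eventually.of_forall fun t => sq_nonneg _) ?_
    filter_upwards [Filter.eventually_ge_atTop 0] with t ht
    exact hbound t ht
  have habs : Filter.Tendsto (fun t => |x 0 t - c|) Filter.atTop (nhds 0) := by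
    have := hsq.sqrt
    simpa [Real.sqrt_sq_eq_abs] using this
  have h0 := (tendsto_zero_iff_abs_tendsto_zero (fun t => x 0 t - c)).2 habs
  have := h0.add_const c
  simpa using this

/-- Coefficients of the kernels. -/
noncomputable def auxc (b : ℕ → ℝ) (j i : ℕ) : ℝ :=
  b i * ∏ k ∈ (Finset.Icc 1 j).erase i, b k / (b k - b i)

lemma auxc_succ (b : ℕ → ℝ) (j i : ℕ) (hi : i ∈ Finset.Icc 1 j) (hne : b (j + 1) ≠ b i) :
    b (j + 1) * auxc b j i = (b (j + 1) - b i) * auxc b (j + 1) i := by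
  rw [Finset.mem_Icc] at hi
  have h : (Finset.Icc 1 (j + 1)).erase i = insert (j + 1) ((Finset.Icc 1 j).erase i) := by
    ext k
    simp only [Finset.mem_erase, Finset.mem_insert, Finset.mem_Icc]
    omega
  unfold auxc
  rw [h, Finset.prod_insert (by simp)]
  have := sub_ne_zero.2 hne
  field_simp

lemma auxc_sum (b : ℕ → ℝ) (n : ℕ) (hn : 2 ≤ n)
    (hbd : ∀ i ∈ Finset.Icc 1 n, ∀ j ∈ Finset.Icc 1 n, i ≠ j → b i ≠ b j) :
    ∑ i ∈ Finset.Icc 1 n, auxc b n i = 0 := by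
  have hinj : Set.InjOn (fun i => - b i) (Finset.Icc 1 n : Finset ℕ) := by
    intro i hi j hj hij
    by_contra hne
    exact hbd i hi j hj hne (neg_injective hij)
  have h := Lagrange.coeff_eq_sum hinj (P := (1 : Polynomial ℝ)) (by
    rw [Polynomial.degree_one, Nat.card_Icc]
    exact_mod_cast (by omega : 0 < n + 1 - 1))
  rw [Polynomial.coeff_one, if_neg (by rw [Nat.card_Icc]; omega)] at h
  have h2 : ∀ i ∈ Finset.Icc 1 n, auxc b n i = (∏ k ∈ Finset.Icc 1 n, b k) *
      (Polynomial.eval (-b i) (1 : Polynomial ℝ) / ∏ k ∈ (Finset.Icc 1 n).erase i, (-b i - -b k)) := by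
    intro i hi
    unfold auxc
    rw [Finset.prod_div_distrib, ← Finset.mul_prod_erase _ _ hi, Polynomial.eval_one]
    have : ∀ k, -b i - -b k = b k - b i := fun k => by ring
    simp_rw [this]
    ring
  rw [Finset.sum_congr rfl h2, ← Finset.mul_sum, ← h, mul_zero]

/-- **Asymptotic behavior of the memory equation.**  The solution of the memory equation with
kernel `K(t) = ∑ⱼ aⱼ Kⱼ(t)` converges to the equilibrium value `u₀ / Z`. -/
theorem stmt_3 (N : ℕ) (hN : 1 ≤ N) (a b : ℕ → ℝ) (u₀ : ℝ)
    (ha : ∀ j ∈ Finset.Icc 1 N, 0 ≤ a j)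
    (hb : ∀ j ∈ Finset.Icc 1 N, 0 < b j)
    (hbd : ∀ i ∈ Finset.Icc 1 N, ∀ j ∈ Finset.Icc 1 N, i ≠ j → b i ≠ b j)
    (K : ℝ → ℝ)
    (hK : K = fun t => ∑ j ∈ Finset.Icc 1 N, a j *
      ∑ i ∈ Finset.Icc 1 j, b i * (∏ k ∈ (Finset.Icc 1 j).erase i, b k / (b k - b i)) *
        Real.exp (-(b i) * t))
    (u : ℝ → ℝ)
    (hu : ∀ t : ℝ, 0 ≤ t →
      HasDerivAt u (-(∑ k ∈ Finset.Icc 1 N, a k) * u t + ∫ s in (0:ℝ)..t, K (t - s) * u s) t)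
    (hu0 : u 0 = u₀)
    (Z : ℝ)
    (hZ : Z = 1 + ∑ i ∈ Finset.Icc 1 N, (1 / b i) * ∑ j ∈ Finset.Icc i N, a j) :
    Filter.Tendsto u Filter.atTop (nhds (u₀ / Z)) := by
  have hwc : Continuous (fun t => u (max t 0)) := by
    rw [continuous_iff_continuousAt]
    intro t
    have h1 := (hu (max t 0) (le_max_right _ _)).continuousAt
    exact ContinuousAt.comp (f := fun t : ℝ => max t 0) h1 (by fun_prop)
  set w : ℝ → ℝ := fun t => u (max t 0) with hw
  have hwu : ∀ t, 0 ≤ t → w t = u t := fun t ht => by simp only [hw, max_eq_left ht]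
  set y : ℕ → ℝ → ℝ := fun i t =>
    Real.exp (-(b i) * t) * ∫ s in (0:ℝ)..t, Real.exp (b i * s) * w s with hy
  have hyd : ∀ i t, HasDerivAt (y i) (w t - b i * y i t) t := by
    intro i t
    have hc : Continuous (fun s => Real.exp (b i * s) * w s) := by fun_prop
    have h1 := (hc.integral_hasStrictDerivAt 0 t).hasDerivAt
    have h2 := (((hasDerivAt_id t).const_mul (-(b i))).exp).mul h1
    refine h2.congr_deriv ?_
    have h3 : Real.exp (-b i * t) * (Real.exp (b i * t) * w t) = w t := by
      rw [← mul_assoc, ← Real.exp_add]; simp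
    simp only [id, hy]
    rw [h3]
    ring
  set x : ℕ → ℝ → ℝ := fun j => if j = 0 then u else
    fun t => ∑ i ∈ Finset.Icc 1 j, auxc b j i * y i t with hxdef
  have hx0 : x 0 = u := by simp [hxdef]
  have hxs : ∀ j, 1 ≤ j → x j = fun t => ∑ i ∈ Finset.Icc 1 j, auxc b j i * y i t := by
    intro j hj
    simp only [hxdef]
    rw [if_neg (by omega)]
  rw [← hx0]
  refine aux_chain N hN a b u₀ ha hb x ?_ ?_ (by rw [hx0, hu0]) ?_ Z hZ
  · intro t ht
    rw [hx0]
    refine (hu t ht).congr_deriv ?_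
    have hint : ∫ s in (0:ℝ)..t, K (t - s) * u s = ∑ j ∈ Finset.Icc 1 N, a j * x j t := by
      have e1 : ∫ s in (0:ℝ)..t, K (t - s) * u s = ∫ s in (0:ℝ)..t,
          ∑ j ∈ Finset.Icc 1 N, ∑ i ∈ Finset.Icc 1 j,
            (a j * auxc b j i * Real.exp (-(b i) * t)) * (Real.exp (b i * s) * w s) := by
        apply intervalIntegral.integral_congr
        intro s hs
        rw [Set.uIcc_of_le ht] at hs
        simp only
        rw [← hwu s hs.1, hK]
        simp only [Finset.sum_mul, Finset.mul_sum]
        apply Finset.sum_congr rfl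
        intro j _
        apply Finset.sum_congr rfl
        intro i _
        have : Real.exp (-(b i) * (t - s)) = Real.exp (-(b i) * t) * Real.exp (b i * s) := by
          rw [← Real.exp_add]; congr 1; ring
        rw [this]
        unfold auxc
        ring
      rw [e1, intervalIntegral.integral_finsetSum]
      · apply Finset.sum_congr rfl
        intro j hj
        rw [intervalIntegral.integral_finsetSum, hxs j (Finset.mem_Icc.1 hj).1, Finset.mul_sum]
        · apply Finset.sum_congr rfl
          intro i _
          rw [intervalIntegral.integral_const_mul]
          simp only [hy]
          ring
        · intro i _
          apply Continuous.intervalIntegrable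
          fun_prop
      · intro i _
        apply Continuous.intervalIntegrable
        fun_prop
    rw [hint]
    simp only [mul_sub, Finset.sum_sub_distrib, ← Finset.sum_mul]
    ring
  · intro j hj t ht
    rw [Finset.mem_Icc] at hj
    rw [hxs j hj.1]
    have h1 := HasDerivAt.fun_sum (u := Finset.Icc 1 j)
        (fun i _ => (hyd i t).const_mul (auxc b j i))
    refine h1.congr_deriv ?_
    obtain ⟨m, rfl⟩ : ∃ m, j = m + 1 := ⟨j - 1, by omega⟩
    simp only [Nat.add_sub_cancel]
    rcases Nat.eq_zero_or_pos m with rfl | hm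
    · rw [hx0, ← hwu t ht]
      simp [auxc]
    · rw [hxs m hm]
      have hs := auxc_sum b (m + 1) (by omega) (fun i hi k hk => hbd i
        (Finset.Icc_subset_Icc_right hj.2 hi) k (Finset.Icc_subset_Icc_right hj.2 hk))
      have e1 : ∑ i ∈ Finset.Icc 1 (m + 1), auxc b (m + 1) i * (w t - b i * y i t)
          = - ∑ i ∈ Finset.Icc 1 (m + 1), auxc b (m + 1) i * (b i * y i t) := by
        simp only [mul_sub, Finset.sum_sub_distrib, ← Finset.sum_mul]
        rw [hs]
        ring
      rw [e1, Finset.sum_Icc_succ_top (by omega), Finset.sum_Icc_succ_top (by omega)]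
      have e2 : b (m + 1) * ∑ i ∈ Finset.Icc 1 m, auxc b m i * y i t
          = ∑ i ∈ Finset.Icc 1 m, ((b (m + 1) - b i) * auxc b (m + 1) i) * y i t := by
        rw [Finset.mul_sum]
        apply Finset.sum_congr rfl
        intro i hi
        rw [← auxc_succ b m i hi, mul_assoc]
        rw [Finset.mem_Icc] at hi
        apply hbd _ (Finset.mem_Icc.2 hj) _ (Finset.mem_Icc.2 ⟨hi.1, by omega⟩)
        omega
      have e3 : ∑ i ∈ Finset.Icc 1 m, ((b (m + 1) - b i) * auxc b (m + 1) i) * y i t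
          = b (m + 1) * ∑ i ∈ Finset.Icc 1 m, auxc b (m + 1) i * y i t
            - ∑ i ∈ Finset.Icc 1 m, auxc b (m + 1) i * (b i * y i t) := by
        rw [Finset.mul_sum, ← Finset.sum_sub_distrib]
        apply Finset.sum_congr rfl
        intro i _
        ring
      rw [mul_sub, e2, e3]
      ring
  · intro j hj
    rw [hxs j (Finset.mem_Icc.1 hj).1]
    simp [hy]
end

section
/- Let 0 = t_0 < t_1 < t_2 < ⋯ < t_N be real numbers such that the differences t_j − t_{j−1} (1 ≤ j ≤ N) are pairwise distinct, and define b_j = 1/(t_j − t_{j−1}). Then the b_j are positive and pairwise distinct, and the kernels K_j(t) = Σ_{i=1}^j b_i ψ_i^j e^{−b_i t} satisfy: K_j(t) ≥ 0 for all t ≥ 0, ∫_0^∞ K_j(t) dt = 1, and ∫_0^∞ t·K_j(t) dt = t_j for every 1 ≤ j ≤ N. -/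
open MeasureTheory Finset

/-- The coefficients `ψ_i^j`. -/
noncomputable def psiAux (b : ℕ → ℝ) (j i : ℕ) : ℝ :=
  ∏ k ∈ (Finset.Icc 1 j).erase i, b k / (b k - b i)

lemma psiAux_sum (b : ℕ → ℝ) (j : ℕ) (hj : 1 ≤ j)
    (hinj : ∀ i ∈ Finset.Icc 1 j, ∀ k ∈ Finset.Icc 1 j, i ≠ k → b i ≠ b k) :
    ∑ i ∈ Finset.Icc 1 j, psiAux b j i = 1 := by
  have h := Lagrange.sum_basis (s := Finset.Icc 1 j) (v := b)
    (by
      intro i hi k hk h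
      by_contra hne
      exact hinj i (by simpa using hi) k (by simpa using hk) hne h)
    ⟨1, by simp [hj]⟩
  have h2 := congrArg (Polynomial.eval 0) h
  rw [Polynomial.eval_finsetSum, Polynomial.eval_one] at h2
  rw [← h2]
  refine Finset.sum_congr rfl fun i hi => ?_
  rw [psiAux, Lagrange.basis, Polynomial.eval_prod]
  refine Finset.prod_congr rfl fun k hk => ?_
  rw [Finset.mem_erase] at hk
  have hne : b k - b i ≠ 0 := sub_ne_zero.2 (hinj k hk.2 i hi hk.1)
  have hne' : b i - b k ≠ 0 := sub_ne_zero.2 (hinj i hi k hk.2 hk.1.symm)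
  simp only [Lagrange.basisDivisor, Polynomial.eval_mul, Polynomial.eval_C, Polynomial.eval_sub,
    Polynomial.eval_X]
  rw [div_eq_iff hne]
  field_simp
  ring

lemma psiAux_succ (b : ℕ → ℝ) (j i : ℕ) (hi : i ∈ Finset.Icc 1 j)
    (hne : b i ≠ b (j + 1)) :
    psiAux b (j + 1) i * (b (j + 1) - b i) = b (j + 1) * psiAux b j i := by
  have hne' : b (j + 1) - b i ≠ 0 := sub_ne_zero.2 hne.symm
  have : (Finset.Icc 1 (j + 1)).erase i = insert (j + 1) ((Finset.Icc 1 j).erase i) := by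
    ext k
    simp only [Finset.mem_erase, Finset.mem_Icc, Finset.mem_insert] at hi ⊢
    omega
  rw [psiAux, this, Finset.prod_insert (by simp), psiAux]
  field_simp

lemma int_exp_aux {c : ℝ} (hc : 0 < c) :
    ∫ s in Set.Ioi (0:ℝ), Real.exp (-c * s) = 1 / c := by
  rw [integral_exp_mul_Ioi (by linarith) 0]
  simp

lemma int_mul_exp_aux {c : ℝ} (hc : 0 < c) :
    ∫ s in Set.Ioi (0:ℝ), s * Real.exp (-c * s) = 1 / c ^ 2 := by
  have h := Real.integral_rpow_mul_exp_neg_mul_Ioi (a := 2) (by norm_num) hc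
  norm_num at h
  simpa using h

theorem stmt_5 (N : ℕ) (hN : 1 ≤ N) (t : ℕ → ℝ) (ht0 : t 0 = 0)
    (hmono : ∀ j ∈ Finset.Icc 1 N, t (j - 1) < t j)
    (hdiff : ∀ i ∈ Finset.Icc 1 N, ∀ j ∈ Finset.Icc 1 N, i ≠ j →
      t i - t (i - 1) ≠ t j - t (j - 1))
    (b : ℕ → ℝ) (hb : ∀ j ∈ Finset.Icc 1 N, b j = 1 / (t j - t (j - 1)))
    (K : ℕ → ℝ → ℝ)
    (hK : ∀ j, K j = fun s => ∑ i ∈ Finset.Icc 1 j,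
      b i * (∏ k ∈ (Finset.Icc 1 j).erase i, b k / (b k - b i)) * Real.exp (-(b i) * s)) :
    (∀ j ∈ Finset.Icc 1 N, 0 < b j) ∧
    (∀ i ∈ Finset.Icc 1 N, ∀ j ∈ Finset.Icc 1 N, i ≠ j → b i ≠ b j) ∧
    (∀ j ∈ Finset.Icc 1 N, ∀ s : ℝ, 0 ≤ s → 0 ≤ K j s) ∧
    (∀ j ∈ Finset.Icc 1 N, ∫ s in Set.Ioi (0:ℝ), K j s = 1) ∧
    (∀ j ∈ Finset.Icc 1 N, ∫ s in Set.Ioi (0:ℝ), s * K j s = t j) := by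
  have hpos : ∀ j ∈ Finset.Icc 1 N, 0 < b j := by
    intro j hj
    rw [hb j hj]
    exact one_div_pos.2 (sub_pos.2 (hmono j hj))
  have hinj : ∀ i ∈ Finset.Icc 1 N, ∀ j ∈ Finset.Icc 1 N, i ≠ j → b i ≠ b j := by
    intro i hi j hj hne h
    rw [hb i hi, hb j hj, one_div, one_div] at h
    exact hdiff i hi j hj hne (inv_injective h)
  have hsub : ∀ j ≤ N, ∀ i ∈ Finset.Icc 1 j, i ∈ Finset.Icc 1 N := by
    intro j hj i hi
    simp only [Finset.mem_Icc] at hi ⊢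
    omega
  have hsum : ∀ j, 1 ≤ j → j ≤ N → ∑ i ∈ Finset.Icc 1 j, psiAux b j i = 1 := by
    intro j h1 hj
    exact psiAux_sum b j h1 fun i hi k hk => hinj i (hsub j hj i hi) k (hsub j hj k hk)
  have hrec : ∀ j, j + 1 ≤ N → ∀ i ∈ Finset.Icc 1 j,
      psiAux b (j + 1) i * (b (j + 1) - b i) = b (j + 1) * psiAux b j i := by
    intro j hj i hi
    refine psiAux_succ b j i hi (hinj i (hsub j (by omega) i hi) (j + 1) ?_ ?_)
    · simp only [Finset.mem_Icc]; omega
    · simp only [Finset.mem_Icc] at hi; omega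
  have hK' : ∀ j s, K j s = ∑ i ∈ Finset.Icc 1 j,
      b i * psiAux b j i * Real.exp (-(b i) * s) := by
    intro j s
    rw [hK j]
    rfl
  have hint1 : ∀ i ∈ Finset.Icc 1 N,
      IntegrableOn (fun s : ℝ => Real.exp (-(b i) * s)) (Set.Ioi 0) := by
    intro i hi
    refine Integrable.of_integral_ne_zero ?_
    rw [int_exp_aux (hpos i hi)]
    exact (one_div_pos.2 (hpos i hi)).ne'
  have hint2 : ∀ i ∈ Finset.Icc 1 N,
      IntegrableOn (fun s : ℝ => s * Real.exp (-(b i) * s)) (Set.Ioi 0) := by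
    intro i hi
    refine Integrable.of_integral_ne_zero ?_
    rw [int_mul_exp_aux (hpos i hi)]
    exact (one_div_pos.2 (pow_pos (hpos i hi) 2)).ne'
  refine ⟨hpos, hinj, ?_, ?_, ?_⟩
  · intro j hj
    obtain ⟨h1, h2⟩ := Finset.mem_Icc.1 hj
    clear hj
    induction j, h1 using Nat.le_induction with
    | base =>
      intro s hs
      rw [hK']
      have := hpos 1 (by simp [hN])
      simp [psiAux]
      positivity
    | succ j h1 ih =>
      have ih := ih (by omega)
      have hbp := hpos (j + 1) (by simp [h2])
      have hzero : K (j + 1) 0 = 0 := by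
        have e1 := hsum (j + 1) (by omega) h2
        have e2 := hsum j h1 (by omega)
        have e3 := Finset.sum_congr rfl (hrec j h2)
        rw [← Finset.mul_sum, e2] at e3
        have e4 : ∑ i ∈ Finset.Icc 1 (j + 1), psiAux b (j + 1) i * (b (j + 1) - b i)
            = b (j + 1) * 1 := by
          rw [Finset.sum_Icc_succ_top (by omega), e3]; ring
        simp only [mul_sub, Finset.sum_sub_distrib, ← Finset.sum_mul, e1] at e4
        rw [hK']
        simp only [mul_zero, Real.exp_zero, mul_one]
        simp only [mul_comm (b _)]
        linarith
      have hder : ∀ s, HasDerivAt (fun s => Real.exp (b (j + 1) * s) * K (j + 1) s)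
          (Real.exp (b (j + 1) * s) * (b (j + 1) * K j s)) s := by
        intro s
        have d1 : HasDerivAt (fun s => Real.exp (b (j + 1) * s))
            (Real.exp (b (j + 1) * s) * (b (j + 1))) s := by
          simpa using ((hasDerivAt_id s).const_mul (b (j + 1))).exp
        have d2 : HasDerivAt (K (j + 1)) (∑ i ∈ Finset.Icc 1 (j + 1),
            b i * psiAux b (j + 1) i * (Real.exp (-(b i) * s) * (-(b i)))) s := by
          have : K (j + 1) = fun s => ∑ i ∈ Finset.Icc 1 (j + 1),
              b i * psiAux b (j + 1) i * Real.exp (-(b i) * s) := funext (hK' (j + 1))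
          rw [this]
          refine HasDerivAt.fun_sum fun i _ => HasDerivAt.const_mul _ ?_
          simpa using ((hasDerivAt_id s).const_mul (-(b i))).exp
        refine (d1.mul d2).congr_deriv (Eq.symm ?_)
        rw [mul_assoc, ← mul_add]
        congr 1
        rw [hK', hK', Finset.mul_sum, Finset.mul_sum, ← Finset.sum_add_distrib,
          Finset.sum_Icc_succ_top (by omega)]
        have : ∀ i ∈ Finset.Icc 1 j, b (j + 1) * (b i * psiAux b j i * Real.exp (-(b i) * s))
            = b (j + 1) * (b i * psiAux b (j + 1) i * Real.exp (-(b i) * s))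
              + b i * psiAux b (j + 1) i * (Real.exp (-(b i) * s) * (-(b i))) := by
          intro i hi
          linear_combination (-(b i) * Real.exp (-(b i) * s)) * hrec j h2 i hi
        rw [Finset.sum_congr rfl this]
        ring
      have hm : MonotoneOn (fun s => Real.exp (b (j + 1) * s) * K (j + 1) s) (Set.Ici 0) := by
        refine monotoneOn_of_deriv_nonneg (convex_Ici 0)
          (fun s _ => (hder s).continuousAt.continuousWithinAt)
          (fun s _ => (hder s).differentiableAt.differentiableWithinAt) ?_
        intro s hs
        rw [interior_Ici] at hs
        rw [(hder s).deriv]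
        have := ih s (le_of_lt hs)
        positivity
      intro s hs
      have := hm (Set.self_mem_Ici) (show s ∈ Set.Ici 0 from hs) hs
      simp only [hzero, mul_zero] at this
      exact nonneg_of_mul_nonneg_right this (Real.exp_pos _)
  · intro j hj
    obtain ⟨h1, h2⟩ := Finset.mem_Icc.1 hj
    simp only [hK']
    rw [integral_finsetSum _ fun i hi => (hint1 i (hsub j h2 i hi)).const_mul _,
      ← hsum j h1 h2]
    refine Finset.sum_congr rfl fun i hi => ?_
    have := hpos i (hsub j h2 i hi)
    rw [integral_const_mul, int_exp_aux this]
    field_simp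
  · have key : ∀ j, j ≤ N → ∑ i ∈ Finset.Icc 1 j, psiAux b j i / b i = t j := by
      intro j
      induction j with
      | zero => simp [ht0]
      | succ j ih =>
        intro h2
        have ih := ih (by omega)
        have hm : j + 1 ∈ Finset.Icc 1 N := by simp [h2]
        have hbp := hpos _ hm
        have e1 := hsum (j + 1) (by omega) h2
        have hbt : 1 / b (j + 1) = t (j + 1) - t j := by
          rw [hb _ hm]; simp
        have : ∀ i ∈ Finset.Icc 1 j, psiAux b (j + 1) i / b i
            = psiAux b j i / b i + psiAux b (j + 1) i / b (j + 1) := by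
          intro i hi
          have hbi := hpos i (hsub j (by omega) i hi)
          field_simp
          linear_combination hrec j h2 i hi
        rw [Finset.sum_Icc_succ_top (by omega)] at e1 ⊢
        rw [Finset.sum_congr rfl this, Finset.sum_add_distrib, ih, ← Finset.sum_div,
          add_assoc, ← add_div, e1, hbt]
        ring
    intro j hj
    obtain ⟨h1, h2⟩ := Finset.mem_Icc.1 hj
    have : ∀ s, s * K j s = ∑ i ∈ Finset.Icc 1 j,
        b i * psiAux b j i * (s * Real.exp (-(b i) * s)) := by
      intro s
      rw [hK', Finset.mul_sum]
      exact Finset.sum_congr rfl fun i _ => by ring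
    simp only [this]
    rw [integral_finsetSum _ fun i hi => (hint2 i (hsub j h2 i hi)).const_mul _,
      ← key j h2]
    refine Finset.sum_congr rfl fun i hi => ?_
    have := hpos i (hsub j h2 i hi)
    rw [integral_const_mul, int_mul_exp_aux this]
    field_simp
end

section
/- Let N ≥ 1, let a_1,…,a_N ≥ 0, let b_1,…,b_N > 0 be pairwise distinct, set a = Σ_{j=1}^N a_j, and let u : [0,∞) → ℝ be differentiable with u'(t) = −a·u(t) + ∫_0^t K(t−s)·u(s) ds for all t ≥ 0 and u(0) = u_0. Then there exists a differentiable function p : [0,∞) → ℝ^{N+1} with p'(t) = A* p(t) for all t ≥ 0, p(0) = (u_0, 0, …, 0), and p_0(t) = u(t) for all t ≥ 0; i.e., the solution of the memory equation is the first component of a Markov process in a higher dimensional space. -/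
open MeasureTheory Finset

noncomputable def memPsi (b : ℕ → ℝ) (j m i : ℕ) : ℝ :=
  ∏ k ∈ (Finset.Icc j m).erase i, b k / (b k - b i)

noncomputable def memI (c : ℝ) (U : ℝ → ℝ) (t : ℝ) : ℝ :=
  Real.exp (-c * t) * ∫ s in (0:ℝ)..t, Real.exp (c * s) * U s

noncomputable def memQ (b : ℕ → ℝ) (U : ℝ → ℝ) (j m : ℕ) (t : ℝ) : ℝ :=
  ∑ i ∈ Finset.Icc j m, (b i / b j) * memPsi b j m i * memI (b i) U t

noncomputable def memP (N : ℕ) (a b : ℕ → ℝ) (U : ℝ → ℝ) (j : ℕ) (t : ℝ) : ℝ :=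
  ∑ m ∈ Finset.Icc j N, a m * memQ b U j m t

lemma memI_deriv (c : ℝ) (U : ℝ → ℝ) (hU : Continuous U) (t : ℝ) :
    HasDerivAt (memI c U) (U t - c * memI c U t) t := by
  have hc : Continuous (fun s => Real.exp (c * s) * U s) := by fun_prop
  have h1 : HasDerivAt (fun t => ∫ s in (0:ℝ)..t, Real.exp (c * s) * U s)
      (Real.exp (c * t) * U t) t :=
    intervalIntegral.integral_hasDerivAt_right (hc.intervalIntegrable _ _)
      (hc.stronglyMeasurableAtFilter _ _) hc.continuousAt
  have h2 : HasDerivAt (fun t : ℝ => Real.exp (-c * t)) (Real.exp (-c * t) * (-c)) t := by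
    have := ((hasDerivAt_id t).const_mul (-c)).exp
    simpa using this
  have h3 := h2.mul h1
  have h4 : Real.exp (-c * t) * Real.exp (c * t) = 1 := by
    rw [← Real.exp_add]; simp
  refine h3.congr_deriv ?_
  unfold memI
  linear_combination U t * h4

lemma memI_eq (c : ℝ) (U : ℝ → ℝ) (t : ℝ) :
    ∫ s in (0:ℝ)..t, Real.exp (-c * (t - s)) * U s = memI c U t := by
  unfold memI
  rw [← intervalIntegral.integral_const_mul]
  congr 1
  funext s
  rw [← mul_assoc, ← Real.exp_add]
  congr 2
  ring

lemma memPsi_sum (b : ℕ → ℝ) (j m : ℕ) (hjm : j < m)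
    (hbd : ∀ i ∈ Finset.Icc j m, ∀ k ∈ Finset.Icc j m, i ≠ k → b i ≠ b k) :
    ∑ i ∈ Finset.Icc j m, b i * memPsi b j m i = 0 := by
  have hinj : Set.InjOn (fun i => - b i) (Finset.Icc j m : Finset ℕ) := by
    intro x hx y hy hxy
    by_contra hne
    exact hbd x hx y hy hne (neg_injective hxy)
  have hcard : 2 ≤ (Finset.Icc j m).card := by simp; omega
  have h := Lagrange.coeff_eq_sum (P := (1 : Polynomial ℝ)) hinj (by
    rw [Polynomial.degree_one]; exact_mod_cast (by omega : 0 < (Finset.Icc j m).card))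
  rw [Polynomial.coeff_one, if_neg (by omega)] at h
  have h2 : ∀ i ∈ Finset.Icc j m, b i * memPsi b j m i =
      (∏ k ∈ Finset.Icc j m, b k) * (Polynomial.eval (-b i) (1 : Polynomial ℝ) /
        ∏ k ∈ (Finset.Icc j m).erase i, (-b i - -b k)) := by
    intro i hi
    rw [← Finset.mul_prod_erase _ _ hi, memPsi, Finset.prod_div_distrib, Polynomial.eval_one]
    have : ∀ k, -b i - -b k = b k - b i := fun k => by ring
    simp only [this]
    ring
  rw [Finset.sum_congr rfl h2, ← Finset.mul_sum, ← h, mul_zero]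

lemma memPsi_succ (b : ℕ → ℝ) (j m i : ℕ) (hi : j + 1 ≤ i) (him : i ≤ m) :
    memPsi b j m i = b j / (b j - b i) * memPsi b (j+1) m i := by
  have h : (Finset.Icc j m).erase i = insert j ((Finset.Icc (j+1) m).erase i) := by
    ext x; simp; omega
  rw [memPsi, h, Finset.prod_insert (by simp), memPsi]

lemma memQ_deriv (b : ℕ → ℝ) (U : ℝ → ℝ) (hU : Continuous U) (j m : ℕ) (hjm : j ≤ m)
    (hb : ∀ i ∈ Finset.Icc j m, 0 < b i)
    (hbd : ∀ i ∈ Finset.Icc j m, ∀ k ∈ Finset.Icc j m, i ≠ k → b i ≠ b k) (t : ℝ) :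
    HasDerivAt (memQ b U j m)
      ((if m = j then U t else 0) - b j * memQ b U j m t + b (j+1) * memQ b U (j+1) m t) t := by
  have h : HasDerivAt (memQ b U j m) (∑ i ∈ Finset.Icc j m,
      (b i / b j) * memPsi b j m i * (U t - b i * memI (b i) U t)) t := by
    unfold memQ
    exact HasDerivAt.fun_sum fun i _ => (memI_deriv (b i) U hU t).const_mul _
  refine h.congr_deriv ?_
  have hj : 0 < b j := hb j (by simp [hjm])
  have e1 : ∑ i ∈ Finset.Icc j m, (b i / b j) * memPsi b j m i = if m = j then 1 else 0 := by
    split_ifs with hm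
    · subst hm
      simp [memPsi, hj.ne']
    · have := memPsi_sum b j m (by omega) hbd
      calc _ = (∑ i ∈ Finset.Icc j m, b i * memPsi b j m i) / b j := by
            rw [Finset.sum_div]; exact Finset.sum_congr rfl fun i _ => by ring
        _ = 0 := by rw [this]; simp
  have e2 : ∑ i ∈ Finset.Icc j m, (b j - b i) * ((b i / b j) * memPsi b j m i * memI (b i) U t)
      = b (j+1) * memQ b U (j+1) m t := by
    have hs : Finset.Icc j m = insert j (Finset.Icc (j+1) m) := by
      ext x; simp; omega
    rw [hs, Finset.sum_insert (by simp), sub_self, zero_mul, zero_add, memQ, Finset.mul_sum]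
    refine Finset.sum_congr rfl fun i hi => ?_
    rw [Finset.mem_Icc] at hi
    have hne : b j - b i ≠ 0 := sub_ne_zero.2
      (hbd j (by simp [hjm]) i (by simp; omega) (by omega))
    have hj1 : b (j+1) ≠ 0 := (hb (j+1) (by simp; omega)).ne'
    have hj0 := hj.ne'
    rw [memPsi_succ b j m i hi.1 hi.2]
    field_simp
  rw [← e2]
  have e3 : (if m = j then U t else 0) = (if m = j then (1:ℝ) else 0) * U t := by
    split_ifs <;> simp
  rw [e3, ← e1, memQ, Finset.sum_mul, Finset.mul_sum, ← Finset.sum_sub_distrib,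
    ← Finset.sum_add_distrib]
  exact Finset.sum_congr rfl fun i _ => by ring

lemma memP_deriv (N : ℕ) (a b : ℕ → ℝ) (U : ℝ → ℝ) (hU : Continuous U) (j : ℕ) (hj1 : 1 ≤ j)
    (hjN : j ≤ N)
    (hb : ∀ j ∈ Finset.Icc 1 N, 0 < b j)
    (hbd : ∀ i ∈ Finset.Icc 1 N, ∀ j ∈ Finset.Icc 1 N, i ≠ j → b i ≠ b j) (t : ℝ) :
    HasDerivAt (memP N a b U j)
      (a j * U t - b j * memP N a b U j t + b (j+1) * memP N a b U (j+1) t) t := by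
  have h : HasDerivAt (memP N a b U j) (∑ m ∈ Finset.Icc j N, a m *
      ((if m = j then U t else 0) - b j * memQ b U j m t + b (j+1) * memQ b U (j+1) m t)) t := by
    unfold memP
    refine HasDerivAt.fun_sum fun m hm => HasDerivAt.const_mul _ ?_
    rw [Finset.mem_Icc] at hm
    have hsub : ∀ x ∈ Finset.Icc j m, x ∈ Finset.Icc 1 N := by
      intro x; simp only [Finset.mem_Icc]; omega
    exact memQ_deriv b U hU j m hm.1 (fun i hi => hb i (hsub i hi))
      (fun i hi k hk => hbd i (hsub i hi) k (hsub k hk)) t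
  refine h.congr_deriv ?_
  have e1 : a j * U t = ∑ m ∈ Finset.Icc j N, a m * (if m = j then U t else 0) := by
    simp [hjN]
  have e2 : memP N a b U (j+1) t = ∑ m ∈ Finset.Icc j N, a m * memQ b U (j+1) m t := by
    have hs : Finset.Icc j N = insert j (Finset.Icc (j+1) N) := by
      ext x; simp; omega
    rw [hs, Finset.sum_insert (by simp), memP]
    simp [memQ]
  rw [e1, e2, memP, Finset.mul_sum, Finset.mul_sum, ← Finset.sum_sub_distrib,
    ← Finset.sum_add_distrib]
  exact Finset.sum_congr rfl fun i _ => by ring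

lemma memP_zero (N : ℕ) (a b : ℕ → ℝ) (U : ℝ → ℝ) (j : ℕ) : memP N a b U j 0 = 0 := by
  simp [memP, memQ, memI]

/-- **From Memory to Markov.**  The solution of the memory equation with kernel
`K(t) = ∑ⱼ aⱼ Kⱼ(t)` is the first component of a Markov process generated by the loop
Markov generator `A*`. -/
theorem stmt_7 (N : ℕ) (hN : 1 ≤ N) (a b : ℕ → ℝ) (u₀ : ℝ)
    (ha : ∀ j ∈ Finset.Icc 1 N, 0 ≤ a j)
    (hb : ∀ j ∈ Finset.Icc 1 N, 0 < b j)
    (hbd : ∀ i ∈ Finset.Icc 1 N, ∀ j ∈ Finset.Icc 1 N, i ≠ j → b i ≠ b j)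
    (Astar : Matrix (Fin (N + 1)) (Fin (N + 1)) ℝ)
    (hA : Astar = Matrix.of fun i j : Fin (N + 1) =>
      if (i : ℕ) = 0 ∧ (j : ℕ) = 0 then -(∑ k ∈ Finset.Icc 1 N, a k)
      else if (i : ℕ) = 0 ∧ (j : ℕ) = 1 then b 1
      else if (j : ℕ) = 0 then a (i : ℕ)
      else if (i : ℕ) = (j : ℕ) then -(b (i : ℕ))
      else if (j : ℕ) = (i : ℕ) + 1 then b (j : ℕ)
      else 0)
    (K : ℝ → ℝ)
    (hK : K = fun t => ∑ j ∈ Finset.Icc 1 N, a j *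
      ∑ i ∈ Finset.Icc 1 j, b i * (∏ k ∈ (Finset.Icc 1 j).erase i, b k / (b k - b i)) *
        Real.exp (-(b i) * t))
    (u : ℝ → ℝ)
    (hu : ∀ t : ℝ, 0 ≤ t →
      HasDerivAt u (-(∑ k ∈ Finset.Icc 1 N, a k) * u t + ∫ s in (0:ℝ)..t, K (t - s) * u s) t)
    (hu0 : u 0 = u₀) :
    ∃ p : ℝ → Fin (N + 1) → ℝ,
      (∀ t : ℝ, 0 ≤ t → HasDerivAt p (Astar.mulVec (p t)) t) ∧
      p 0 = (fun i : Fin (N + 1) => if (i : ℕ) = 0 then u₀ else 0) ∧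
      ∀ t : ℝ, 0 ≤ t → p t 0 = u t := by
  set U : ℝ → ℝ := fun t => u (max t 0) with hUdef
  have hUc : Continuous U := by
    rw [continuous_iff_continuousAt]
    intro t
    have h1 : ContinuousAt u (max t 0) := (hu _ (le_max_right _ _)).continuousAt
    exact ContinuousAt.comp (f := fun t : ℝ => max t 0) h1 (by fun_prop)
  have hUu : ∀ t, 0 ≤ t → U t = u t := fun t ht => by simp [hUdef, ht]
  have hconv : ∀ t, 0 ≤ t → ∫ s in (0:ℝ)..t, K (t - s) * u s = b 1 * memP N a b U 1 t := by
    intro t ht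
    have e1 : ∫ s in (0:ℝ)..t, K (t - s) * u s = ∫ s in (0:ℝ)..t,
        ∑ j ∈ Finset.Icc 1 N, ∑ i ∈ Finset.Icc 1 j,
          (a j * (b i * memPsi b 1 j i)) * (Real.exp (-(b i) * (t - s)) * U s) := by
      refine intervalIntegral.integral_congr fun s hs => ?_
      rw [Set.uIcc_of_le ht] at hs
      simp only [hK]
      rw [hUu s hs.1, Finset.sum_mul]
      refine Finset.sum_congr rfl fun j _ => ?_
      rw [Finset.mul_sum, Finset.sum_mul]
      refine Finset.sum_congr rfl fun i _ => ?_
      rw [memPsi]; ring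
    have hb1 : b 1 ≠ 0 := (hb 1 (by simp [hN])).ne'
    rw [e1, intervalIntegral.integral_finsetSum
      (fun j _ => Continuous.intervalIntegrable (by fun_prop) _ _), memP, Finset.mul_sum]
    refine Finset.sum_congr rfl fun j _ => ?_
    rw [intervalIntegral.integral_finsetSum
      (fun j _ => Continuous.intervalIntegrable (by fun_prop) _ _), memQ, Finset.mul_sum,
      Finset.mul_sum]
    refine Finset.sum_congr rfl fun i _ => ?_
    rw [intervalIntegral.integral_const_mul, memI_eq]
    field_simp
  let P : ℕ → ℝ → ℝ := fun j t => if j = 0 then u t else memP N a b U j t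
  have hmul : ∀ (t : ℝ) (i : Fin (N+1)), Astar.mulVec (fun k : Fin (N+1) => P k t) i =
      if (i : ℕ) = 0 then -(∑ k ∈ Finset.Icc 1 N, a k) * u t + b 1 * memP N a b U 1 t
      else a i * u t - b i * memP N a b U i t + b (i+1) * memP N a b U (i+1) t := by
    intro t i
    have hi := i.2
    have htop : memP N a b U (N+1) t = 0 := by simp [memP]
    rw [hA]
    simp only [Matrix.mulVec, dotProduct, Matrix.of_apply]
    rw [Fin.sum_univ_eq_sum_range (fun k => (if (i : ℕ) = 0 ∧ k = 0 then -(∑ k ∈ Finset.Icc 1 N, a k)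
      else if (i : ℕ) = 0 ∧ k = 1 then b 1
      else if k = 0 then a (i : ℕ)
      else if (i : ℕ) = k then -(b (i : ℕ))
      else if k = (i : ℕ) + 1 then b k
      else 0) * P k t) (N+1)]
    split_ifs with h0
    · have : ∀ k ∈ Finset.range (N+1), (if (i : ℕ) = 0 ∧ k = 0 then -(∑ k ∈ Finset.Icc 1 N, a k)
          else if (i : ℕ) = 0 ∧ k = 1 then b 1
          else if k = 0 then a (i : ℕ)
          else if (i : ℕ) = k then -(b (i : ℕ))
          else if k = (i : ℕ) + 1 then b k
          else 0) * P k t = (if k = 0 then -(∑ k ∈ Finset.Icc 1 N, a k) * u t else 0) +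
            (if k = 1 then b 1 * memP N a b U 1 t else 0) := by
        intro k _
        rcases k with _ | _ | k
        · simp [h0, P]
        · simp [h0, P]
        · simp [h0]
      rw [Finset.sum_congr rfl this, Finset.sum_add_distrib, Finset.sum_ite_eq',
        Finset.sum_ite_eq', if_pos (by simp), if_pos (by simp; omega)]
    · have : ∀ k ∈ Finset.range (N+1), (if (i : ℕ) = 0 ∧ k = 0 then -(∑ k ∈ Finset.Icc 1 N, a k)
          else if (i : ℕ) = 0 ∧ k = 1 then b 1
          else if k = 0 then a (i : ℕ)
          else if (i : ℕ) = k then -(b (i : ℕ))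
          else if k = (i : ℕ) + 1 then b k
          else 0) * P k t = (if k = 0 then a i * u t else 0) +
            (if k = (i : ℕ) then -(b i * memP N a b U i t) else 0) +
            (if k = (i : ℕ) + 1 then b (i+1) * memP N a b U (i+1) t else 0) := by
        intro k _
        by_cases hk0 : k = 0
        · subst hk0
          have h0' : ¬ (0 = (i : ℕ)) := fun h => h0 h.symm
          simp only [h0, h0', P]
          simp
        · by_cases hki : k = (i : ℕ)
          · rw [hki]; simp only [h0, P]; simp
          · have hki' : ¬ ((i : ℕ) = k) := fun h => hki h.symm
            by_cases hk1 : k = (i : ℕ) + 1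
            · rw [hk1]; simp only [h0, P]; simp
            · simp only [h0, hk0, hki, hki', hk1]; simp
      rw [Finset.sum_congr rfl this, Finset.sum_add_distrib, Finset.sum_add_distrib,
        Finset.sum_ite_eq', Finset.sum_ite_eq', Finset.sum_ite_eq', if_pos (by simp),
        if_pos (Finset.mem_range.2 hi)]
      split_ifs with h2
      · ring
      · have : (i : ℕ) = N := by simp at h2; omega
        rw [this, htop]; ring
  refine ⟨fun t k => P k t, ?_, ?_, ?_⟩
  · intro t ht
    rw [hasDerivAt_pi]
    intro i
    rw [hmul]
    split_ifs with h0
    · simp only [P, h0, if_true]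
      rw [← hconv t ht]
      exact hu t ht
    · simp only [P, h0, if_false]
      rw [← hUu t ht]
      exact memP_deriv N a b U hUc i (by omega) (by omega) hb hbd t
  · funext i
    simp only [P]
    rw [memP_zero, hu0]
  · intro t _
    simp [P]
end

section
/- Let a_1, a_2 ≥ 0 and b_1, b_2 > 0 with b_1 ≠ b_2, and set a = a_1 + a_2. Let p = (u, v_1, v_2) : [0,∞) → ℝ^3 be differentiable with p'(t) = B* p(t) for all t ≥ 0 and p(0) = (u_0, 0, 0). Then u satisfies u'(t) = −a·u(t) + ∫_0^t K(t−s)·u(s) ds for all t ≥ 0, where K(t) = a_1 b_1 e^{−b_1 t} + a_2·(b_1 b_2/(b_2 − b_1))·(e^{−b_1 t} − e^{−b_2 t}). -/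
open MeasureTheory

/-- **Three states: from Markov to Memory.**  The first component of the three-state loop
Markov process solves the memory equation with kernel
`K(t) = a₁b₁e^{−b₁t} + a₂ (b₁b₂/(b₂−b₁)) (e^{−b₁t} − e^{−b₂t})`. -/
theorem stmt_8 (a₁ a₂ b₁ b₂ : ℝ) (ha₁ : 0 ≤ a₁) (ha₂ : 0 ≤ a₂)
    (hb₁ : 0 < b₁) (hb₂ : 0 < b₂) (hbd : b₁ ≠ b₂) (u₀ : ℝ)
    (Bstar : Matrix (Fin 3) (Fin 3) ℝ)
    (hB : Bstar = !![-a₁ - a₂, b₁, 0; a₁, -b₁, b₂; a₂, 0, -b₂])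
    (p : ℝ → Fin 3 → ℝ)
    (hp : ∀ t : ℝ, 0 ≤ t → HasDerivAt p (Bstar.mulVec (p t)) t)
    (hp0 : p 0 = ![u₀, 0, 0])
    (K : ℝ → ℝ)
    (hK : K = fun t => a₁ * b₁ * Real.exp (-b₁ * t) +
      a₂ * (b₁ * b₂ / (b₂ - b₁)) * (Real.exp (-b₁ * t) - Real.exp (-b₂ * t))) :
    ∀ t : ℝ, 0 ≤ t →
      HasDerivAt (fun s => p s 0)
        (-(a₁ + a₂) * p t 0 + ∫ s in (0:ℝ)..t, K (t - s) * p s 0) t := by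
  intro t ht
  have hcomp : ∀ s : ℝ, 0 ≤ s → ∀ i, HasDerivAt (fun s => p s i) (Bstar.mulVec (p s) i) s :=
    fun s hs i => (hasDerivAt_pi.1 (hp s hs)) i
  have h0 : ∀ s : ℝ, 0 ≤ s →
      HasDerivAt (fun s => p s 0) ((-a₁ - a₂) * p s 0 + b₁ * p s 1) s := by
    intro s hs
    refine (hcomp s hs 0).congr_deriv ?_
    subst hB
    simp [Matrix.mulVec, dotProduct, Fin.sum_univ_three]
  have h1 : ∀ s : ℝ, 0 ≤ s →
      HasDerivAt (fun s => p s 1) (a₁ * p s 0 - b₁ * p s 1 + b₂ * p s 2) s := by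
    intro s hs
    refine (hcomp s hs 1).congr_deriv ?_
    subst hB
    simp [Matrix.mulVec, dotProduct, Fin.sum_univ_three]
    ring
  have h2 : ∀ s : ℝ, 0 ≤ s →
      HasDerivAt (fun s => p s 2) (a₂ * p s 0 - b₂ * p s 2) s := by
    intro s hs
    refine (hcomp s hs 2).congr_deriv ?_
    subst hB
    simp [Matrix.mulVec, dotProduct, Fin.sum_univ_three]
    ring
  have hexp : ∀ b s : ℝ, HasDerivAt (fun s => Real.exp (-b * (t - s)))
      (b * Real.exp (-b * (t - s))) s := by
    intro b s
    have h := (((hasDerivAt_id s).const_sub t).const_mul (-b)).exp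
    refine h.congr_deriv ?_
    simp
    ring
  have hne : b₂ - b₁ ≠ 0 := sub_ne_zero.2 hbd.symm
  obtain ⟨c, hc⟩ : ∃ c, c = b₁ * b₂ / (b₂ - b₁) := ⟨_, rfl⟩
  have hc' : c * (b₂ - b₁) = b₁ * b₂ := by rw [hc]; field_simp
  rw [← hc] at hK
  have hint : ∫ s in (0:ℝ)..t, K (t - s) * p s 0 = b₁ * p t 1 := by
    have hF : ∀ s ∈ Set.uIcc 0 t, HasDerivAt
        (fun s => b₁ * (Real.exp (-b₁ * (t - s)) * p s 1) +
          c * ((Real.exp (-b₁ * (t - s)) - Real.exp (-b₂ * (t - s))) * p s 2))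
        (K (t - s) * p s 0) s := by
      intro s hs
      rw [Set.uIcc_of_le ht] at hs
      have h := (((hexp b₁ s).mul (h1 s hs.1)).const_mul b₁).add
        ((((hexp b₁ s).sub (hexp b₂ s)).mul (h2 s hs.1)).const_mul c)
      refine h.congr_deriv ?_
      subst hK
      simp only [Pi.sub_apply]
      linear_combination (-Real.exp (-b₁ * (t - s)) * p s 2) * hc'
    rw [intervalIntegral.integral_eq_sub_of_hasDerivAt hF]
    · simp [hp0]
    · apply ContinuousOn.intervalIntegrable
      intro s hs
      rw [Set.uIcc_of_le ht] at hs
      refine ContinuousAt.continuousWithinAt (ContinuousAt.mul ?_ (h0 s hs.1).continuousAt)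
      subst hK
      fun_prop
  rw [hint]
  refine (h0 t ht).congr_deriv ?_
  ring
end

section
/- Let α_1 > α_2 > 0 and c_1, c_2 ∈ ℝ with c_1 + c_2 ≥ 0 and c_2 ≥ 0, let K(t) = c_1 e^{−α_1 t} + c_2 e^{−α_2 t}, and set a = (α_1 c_2 + α_2 c_1)/(α_1 α_2). Define b_1 = α_1, b_2 = α_2, a_2 = c_2(α_1 − α_2)/(α_1 α_2), a_1 = (c_1 + c_2)/α_1. Then a_1, a_2 ≥ 0, a = a_1 + a_2, and for every differentiable u : [0,∞) → ℝ with u'(t) = −a·u(t) + ∫_0^t K(t−s)·u(s) ds for all t ≥ 0 and u(0) = u_0, there exists a differentiable p : [0,∞) → ℝ^3 with p'(t) = B* p(t), p(0) = (u_0, 0, 0), whose first component equals u. -/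
open MeasureTheory

lemma hasDerivAt_J (α : ℝ) (v : ℝ → ℝ) (hv : Continuous v) (t : ℝ) :
    HasDerivAt (fun t => Real.exp (-α * t) * ∫ s in (0:ℝ)..t, Real.exp (α * s) * v s)
      (-α * (Real.exp (-α * t) * ∫ s in (0:ℝ)..t, Real.exp (α * s) * v s) + v t) t := by
  have hc : Continuous fun s => Real.exp (α * s) * v s := by fun_prop
  have h1 : HasDerivAt (fun t => ∫ s in (0:ℝ)..t, Real.exp (α * s) * v s)
      (Real.exp (α * t) * v t) t := hc.integral_hasStrictDerivAt 0 t |>.hasDerivAt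
  have h2 : HasDerivAt (fun t => Real.exp (-α * t)) (Real.exp (-α * t) * (-α * 1)) t :=
    ((hasDerivAt_id t).const_mul (-α)).exp
  have h3 : Real.exp (-α * t) * Real.exp (α * t) = 1 := by
    rw [← Real.exp_add]; simp
  refine (h2.mul h1).congr_deriv ?_
  linear_combination v t * h3

/-- **Three states: from Memory to Markov.**  For a two-exponential kernel with
`α₁ > α₂ > 0`, `c₁ + c₂ ≥ 0`, `c₂ ≥ 0`, the explicitly constructed rates are nonnegative,
consistent, and the solution of the memory equation is the first component of a
three-dimensional Markov process. -/
theorem stmt_9 (α₁ α₂ c₁ c₂ : ℝ) (hα : α₂ < α₁) (hα₂ : 0 < α₂)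
    (hc : 0 ≤ c₁ + c₂) (hc₂ : 0 ≤ c₂) (u₀ : ℝ)
    (K : ℝ → ℝ)
    (hK : K = fun t => c₁ * Real.exp (-α₁ * t) + c₂ * Real.exp (-α₂ * t))
    (a : ℝ) (ha : a = (α₁ * c₂ + α₂ * c₁) / (α₁ * α₂))
    (b₁ b₂ a₁ a₂ : ℝ)
    (hb₁ : b₁ = α₁) (hb₂ : b₂ = α₂)
    (ha₂ : a₂ = c₂ * (α₁ - α₂) / (α₁ * α₂)) (ha₁ : a₁ = (c₁ + c₂) / α₁) :
    0 ≤ a₁ ∧ 0 ≤ a₂ ∧ a = a₁ + a₂ ∧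
    ∀ u : ℝ → ℝ,
      (∀ t : ℝ, 0 ≤ t →
        HasDerivAt u (-a * u t + ∫ s in (0:ℝ)..t, K (t - s) * u s) t) →
      u 0 = u₀ →
      ∃ p : ℝ → Fin 3 → ℝ,
        (∀ t : ℝ, 0 ≤ t →
          HasDerivAt p ((!![-a₁ - a₂, b₁, 0; a₁, -b₁, b₂; a₂, 0, -b₂]).mulVec (p t)) t) ∧
        p 0 = ![u₀, 0, 0] ∧
        ∀ t : ℝ, 0 ≤ t → p t 0 = u t := by
  have hα₁ : 0 < α₁ := hα₂.trans hα
  refine ⟨?_, ?_, ?_, ?_⟩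
  · rw [ha₁]; positivity
  · rw [ha₂]; exact div_nonneg (mul_nonneg hc₂ (by linarith)) (by positivity)
  · rw [ha, ha₁, ha₂]; field_simp; ring
  have haa : a = a₁ + a₂ := by rw [ha, ha₁, ha₂]; field_simp; ring
  intro u hu hu0
  set v : ℝ → ℝ := fun s => u (max s 0) with hvdef
  have hv : Continuous v := by
    rw [continuous_iff_continuousAt]
    intro s
    have h1 : ContinuousAt u (max s 0) := (hu _ (le_max_right _ _)).continuousAt
    have h2 : ContinuousAt (fun s : ℝ => max s 0) s := by fun_prop
    exact ContinuousAt.comp (f := fun s : ℝ => max s 0) h1 h2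
  have hvu : ∀ t, 0 ≤ t → v t = u t := fun t ht => by simp [hvdef, max_eq_left ht]
  obtain ⟨J, hJ⟩ : ∃ J : ℝ → ℝ → ℝ, J = fun α t =>
    Real.exp (-α * t) * ∫ s in (0:ℝ)..t, Real.exp (α * s) * v s := ⟨_, rfl⟩
  have hJd : ∀ α t, HasDerivAt (J α) (-α * J α t + v t) t := by
    intro α t; rw [hJ]; exact hasDerivAt_J α v hv t
  have hJ0 : ∀ α, J α 0 = 0 := by intro α; simp [hJ]
  have hint : ∀ t, 0 ≤ t → ∫ s in (0:ℝ)..t, K (t - s) * u s = c₁ * J α₁ t + c₂ * J α₂ t := by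
    intro t ht
    rw [hJ]
    simp only [← intervalIntegral.integral_const_mul]
    rw [← intervalIntegral.integral_add]
    · apply intervalIntegral.integral_congr
      intro s hs
      rw [Set.uIcc_of_le ht] at hs
      have e : ∀ α, Real.exp (-α * (t - s)) = Real.exp (-α * t) * Real.exp (α * s) := by
        intro α; rw [← Real.exp_add]; congr 1; ring
      simp only [hK, e, hvu s hs.1]
      ring
    · exact Continuous.intervalIntegrable (by fun_prop) _ _
    · exact Continuous.intervalIntegrable (by fun_prop) _ _
  refine ⟨fun t => ![u t, (c₁ * J α₁ t + c₂ * J α₂ t) / α₁, a₂ * J α₂ t], ?_, ?_, ?_⟩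
  · intro t ht
    rw [hasDerivAt_pi]
    intro i
    fin_cases i
    · refine (hu t ht).congr_deriv ?_
      rw [hint t ht]
      simp [Matrix.mulVec, dotProduct, Fin.sum_univ_three, haa, hb₁]
      field_simp
      ring
    · refine ((((hJd α₁ t).const_mul c₁).add ((hJd α₂ t).const_mul c₂)).div_const α₁).congr_deriv ?_
      rw [hvu t ht]
      simp [Matrix.mulVec, dotProduct, Fin.sum_univ_three, hb₁, hb₂, ha₁, ha₂]
      field_simp
      ring
    · refine ((hJd α₂ t).const_mul a₂).congr_deriv ?_
      rw [hvu t ht]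
      simp [Matrix.mulVec, dotProduct, Fin.sum_univ_three, hb₂]
      ring
  · simp [hJ0, hu0]
  · intro t _; simp
end

section
/- There do not exist nonnegative real numbers A, B, C, D, E, F, G such that for all t ≥ 0: 3e^{−t} − 8e^{−2t} + 6e^{−3t} = A e^{−3t} + B e^{−2t} + C e^{−t} + D(e^{−t} − e^{−2t}) + (E/2)(e^{−t} − e^{−3t}) + F(e^{−2t} − e^{−3t}) + G(e^{−t}/2 − e^{−2t} + e^{−3t}/2). Consequently, not every nonnegative linear combination of exponentials can be written as a nonnegative combination of the loop kernels K_j with decay rates 1, 2, 3. -/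
/-- **Counterexample.**  The nonnegative kernel `3e^{−t} − 8e^{−2t} + 6e^{−3t}` cannot be
written as a nonnegative combination of the loop kernels with decay rates `1, 2, 3`. -/
theorem stmt_12 :
    ¬ ∃ A B C D E F G : ℝ,
      0 ≤ A ∧ 0 ≤ B ∧ 0 ≤ C ∧ 0 ≤ D ∧ 0 ≤ E ∧ 0 ≤ F ∧ 0 ≤ G ∧
      ∀ t : ℝ, 0 ≤ t →
        3 * Real.exp (-t) - 8 * Real.exp (-2 * t) + 6 * Real.exp (-3 * t) =
          A * Real.exp (-3 * t) + B * Real.exp (-2 * t) + C * Real.exp (-t) +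
          D * (Real.exp (-t) - Real.exp (-2 * t)) +
          E / 2 * (Real.exp (-t) - Real.exp (-3 * t)) +
          F * (Real.exp (-2 * t) - Real.exp (-3 * t)) +
          G * (Real.exp (-t) / 2 - Real.exp (-2 * t) + Real.exp (-3 * t) / 2) := by
  rintro ⟨A, B, C, D, E, F, G, hA, hB, hC, hD, hE, hF, hG, h⟩
  -- Rewrite the identity in terms of x = e^{-t} = 1 / y, at y = 1, 2, 4.
  have key : ∀ y : ℝ, 1 ≤ y →
      3 * y⁻¹ - 8 * y⁻¹ ^ 2 + 6 * y⁻¹ ^ 3 =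
        A * y⁻¹ ^ 3 + B * y⁻¹ ^ 2 + C * y⁻¹ + D * (y⁻¹ - y⁻¹ ^ 2) +
        E / 2 * (y⁻¹ - y⁻¹ ^ 3) + F * (y⁻¹ ^ 2 - y⁻¹ ^ 3) +
        G * (y⁻¹ / 2 - y⁻¹ ^ 2 + y⁻¹ ^ 3 / 2) := by
    intro y hy
    have e1 : Real.exp (-Real.log y) = y⁻¹ := by
      rw [Real.exp_neg, Real.exp_log (by linarith)]
    have e2 : Real.exp (-2 * Real.log y) = y⁻¹ ^ 2 := by
      rw [← e1, ← Real.exp_nat_mul]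
      congr 1
      push_cast
      ring
    have e3 : Real.exp (-3 * Real.log y) = y⁻¹ ^ 3 := by
      rw [← e1, ← Real.exp_nat_mul]
      congr 1
      push_cast
      ring
    have := h (Real.log y) (Real.log_nonneg hy)
    rwa [e1, e2, e3] at this
  have h1 := key 1 (by norm_num)
  have h2 := key 2 (by norm_num)
  have h4 := key 4 (by norm_num)
  norm_num at h1 h2 h4
  linarith
end

section
/- Let N ≥ 1, let α_1,…,α_N > 0 be pairwise distinct, and let γ_1,…,γ_N ∈ ℝ. Then Σ_{j=1}^N γ_j e^{−α_j t} ≥ 0 for all t ≥ 0 if and only if Σ_{j=1}^N γ_j/(λ + α_j)^m ≥ 0 for every λ > 0 and every integer m ≥ 1. -/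
open Finset

/-- **Positivity criterion via the Laplace transform.**  A linear combination of decaying
exponentials is nonnegative on `[0,∞)` iff all the derived quantities
`∑ⱼ γⱼ/(λ+αⱼ)^m` are nonnegative for `λ > 0`, `m ≥ 1`. -/
theorem stmt_13 (N : ℕ) (hN : 1 ≤ N) (α γ : ℕ → ℝ)
    (hα : ∀ j ∈ Finset.Icc 1 N, 0 < α j)
    (hαd : ∀ i ∈ Finset.Icc 1 N, ∀ j ∈ Finset.Icc 1 N, i ≠ j → α i ≠ α j) :
    (∀ t : ℝ, 0 ≤ t → 0 ≤ ∑ j ∈ Finset.Icc 1 N, γ j * Real.exp (-(α j) * t)) ↔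
    (∀ lam : ℝ, 0 < lam → ∀ m : ℕ, 1 ≤ m →
      0 ≤ ∑ j ∈ Finset.Icc 1 N, γ j / (lam + α j) ^ m) := by
  constructor
  · intro h lam hlam m hm
    have hm0 : (0 : ℝ) < m := by exact_mod_cast hm
    have hG := Real.Gamma_pos_of_pos hm0
    have key : ∀ j ∈ Finset.Icc 1 N,
        ∫ t in Set.Ioi (0 : ℝ), t ^ ((m : ℝ) - 1) * Real.exp (-((lam + α j) * t))
          = (1 / (lam + α j)) ^ m * Real.Gamma m := by
      intro j hj
      rw [Real.integral_rpow_mul_exp_neg_mul_Ioi hm0 (add_pos hlam (hα j hj)), Real.rpow_natCast]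
    have hint : ∀ j ∈ Finset.Icc 1 N, MeasureTheory.Integrable
        (fun t : ℝ => t ^ ((m : ℝ) - 1) * Real.exp (-((lam + α j) * t)))
        (MeasureTheory.volume.restrict (Set.Ioi (0 : ℝ))) := by
      intro j hj
      by_contra hc
      have h1 := key j hj
      rw [MeasureTheory.integral_undef hc] at h1
      have := add_pos hlam (hα j hj)
      have : 0 < (1 / (lam + α j)) ^ m * Real.Gamma m := by positivity
      linarith
    have hsum : ∫ t in Set.Ioi (0 : ℝ), ∑ j ∈ Finset.Icc 1 N,
        γ j * (t ^ ((m : ℝ) - 1) * Real.exp (-((lam + α j) * t)))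
        = (∑ j ∈ Finset.Icc 1 N, γ j / (lam + α j) ^ m) * Real.Gamma m := by
      rw [MeasureTheory.integral_finset_sum _ (fun j hj => (hint j hj).const_mul _),
        Finset.sum_mul]
      refine Finset.sum_congr rfl fun j hj => ?_
      rw [MeasureTheory.integral_const_mul, key j hj, one_div, inv_pow]
      ring
    refine nonneg_of_mul_nonneg_left ?_ hG
    rw [← hsum]
    refine MeasureTheory.setIntegral_nonneg measurableSet_Ioi fun t ht => ?_
    have ht : 0 < t := ht
    have e : ∑ j ∈ Finset.Icc 1 N,
        γ j * (t ^ ((m : ℝ) - 1) * Real.exp (-((lam + α j) * t)))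
        = (t ^ ((m : ℝ) - 1) * Real.exp (-(lam * t))) *
          ∑ j ∈ Finset.Icc 1 N, γ j * Real.exp (-(α j) * t) := by
      rw [Finset.mul_sum]
      refine Finset.sum_congr rfl fun j _ => ?_
      rw [show -((lam + α j) * t) = -(lam * t) + -(α j) * t by ring, Real.exp_add]
      ring
    rw [e]
    exact mul_nonneg (by positivity) (h t ht.le)
  · intro h
    have hpos : ∀ t : ℝ, 0 < t →
        0 ≤ ∑ j ∈ Finset.Icc 1 N, γ j * Real.exp (-(α j) * t) := by
      intro t ht
      have hl : Filter.Tendsto (fun n : ℕ => ∑ j ∈ Finset.Icc 1 N,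
          γ j * ((1 + (α j * t) / n) ^ n)⁻¹) Filter.atTop
          (nhds (∑ j ∈ Finset.Icc 1 N, γ j * Real.exp (-(α j) * t))) := by
        refine tendsto_finset_sum _ fun j _ => Filter.Tendsto.const_mul _ ?_
        rw [neg_mul, Real.exp_neg]
        exact (Real.tendsto_one_add_div_pow_exp (α j * t)).inv₀ (Real.exp_pos _).ne'
      refine ge_of_tendsto hl ?_
      filter_upwards [Filter.eventually_ge_atTop 1] with n hn
      have hn0 : (0 : ℝ) < n := by exact_mod_cast hn
      have h1 := mul_nonneg (by positivity : 0 ≤ ((n : ℝ) / t) ^ n)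
        (h (n / t) (by positivity) n hn)
      rw [Finset.mul_sum] at h1
      refine h1.trans_eq (Finset.sum_congr rfl fun j hj => ?_)
      have ha := hα j hj
      have : (n : ℝ) / t + α j = (n / t) * (1 + α j * t / n) := by field_simp
      rw [this, mul_pow]
      have h2 : ((n : ℝ) / t) ^ n ≠ 0 := by positivity
      have h3 : (1 + α j * t / n) ^ n ≠ 0 := by positivity
      field_simp
    intro t ht
    have hc : Continuous fun t : ℝ => ∑ j ∈ Finset.Icc 1 N, γ j * Real.exp (-(α j) * t) := by
      fun_prop
    have hcl : IsClosed {t : ℝ | 0 ≤ ∑ j ∈ Finset.Icc 1 N, γ j * Real.exp (-(α j) * t)} :=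
      isClosed_le continuous_const hc
    have hsub := hcl.closure_subset_iff.2 (fun t (ht : t ∈ Set.Ioi (0 : ℝ)) => hpos t ht)
    rw [closure_Ioi] at hsub
    exact hsub ht
end

section
/- Let N ≥ 1 and a, b ∈ ℝ, and let M be the (N+1)×(N+1) cyclic matrix with M_{0,0} = −a, M_{i,i} = −b for 1 ≤ i ≤ N, M_{i,i+1} = b for 0 ≤ i ≤ N−1, M_{N,0} = a, and all other entries zero. Then the characteristic polynomial of M is det(λ·I − M) = (λ + a)(λ + b)^N − a·b^N. -/
/-- **Characteristic polynomial of the single-loop generator.**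
`det(λI − M) = (λ+a)(λ+b)^N − a b^N`. -/
theorem stmt_16 (N : ℕ) (hN : 1 ≤ N) (a b : ℝ)
    (M : Matrix (Fin (N + 1)) (Fin (N + 1)) ℝ)
    (hM : M = Matrix.of fun i j : Fin (N + 1) =>
      if (i : ℕ) = 0 ∧ (j : ℕ) = 0 then -a
      else if (i : ℕ) = (j : ℕ) then -b
      else if (j : ℕ) = (i : ℕ) + 1 then b
      else if (i : ℕ) = N ∧ (j : ℕ) = 0 then a
      else 0) :
    ∀ lam : ℝ,
      (lam • (1 : Matrix (Fin (N + 1)) (Fin (N + 1)) ℝ) - M).det =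
        (lam + a) * (lam + b) ^ N - a * b ^ N := by
  intro lam
  obtain ⟨m, rfl⟩ : ∃ m, N = m + 1 := ⟨N - 1, by omega⟩
  set A := lam • (1 : Matrix (Fin (m + 1 + 1)) (Fin (m + 1 + 1)) ℝ) - M with hA
  have hE : ∀ i j : Fin (m + 1 + 1), A i j =
      if (i : ℕ) = 0 ∧ (j : ℕ) = 0 then lam + a
      else if (i : ℕ) = (j : ℕ) then lam + b
      else if (j : ℕ) = (i : ℕ) + 1 then -b
      else if (i : ℕ) = m + 1 ∧ (j : ℕ) = 0 then -a
      else 0 := by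
    intro i j
    rw [hA, hM]
    simp only [Matrix.sub_apply, Matrix.smul_apply, Matrix.one_apply, Matrix.of_apply, Fin.ext_iff,
      smul_eq_mul]
    split_ifs <;> first | omega | ring
  clear_value A
  have h1 : (A.submatrix (Fin.succAbove 0) Fin.succ).det = (lam + b) ^ (m + 1) := by
    rw [Matrix.det_of_isUpperTriangular]
    · simp [hE]
    · intro i j hij
      have hij' : (j : ℕ) < i := hij
      simp only [Matrix.submatrix_apply, hE, Fin.succAbove_zero, Fin.val_succ]
      split_ifs <;> first | omega | rfl | simp_all
  have h2 : (A.submatrix (Fin.succAbove (Fin.last (m + 1))) Fin.succ).det = (-b) ^ (m + 1) := by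
    rw [Matrix.det_of_isLowerTriangular]
    · simp [hE]
    · intro i j hij
      have hij' : (i : ℕ) < j := hij
      simp only [Matrix.submatrix_apply, hE, Fin.succAbove_last, Fin.val_succ, Fin.val_castSucc]
      split_ifs <;> first | omega | rfl | simp_all
  rw [Matrix.det_succ_column_zero, Fin.sum_univ_succ, Fin.sum_univ_castSucc,
    Finset.sum_eq_zero, Fin.succ_last, h1, h2, hE, hE]
  · have h3 : ((-1 : ℝ)) ^ (m + 1) * (-b) ^ (m + 1) = b ^ (m + 1) := by
      rw [← mul_pow]; ring
    simp
    linear_combination (-a) * h3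
  · intro i _
    have hi := i.isLt
    rw [hE]
    simp
    omega
end

section
/- Let N ≥ 1, a ≥ 0, b > 0, and let M be the (N+1)×(N+1) cyclic matrix with M_{0,0} = −a, M_{i,i} = −b for 1 ≤ i ≤ N, M_{i,i+1} = b for 0 ≤ i ≤ N−1, M_{N,0} = a, and all other entries zero. Let p : [0,∞) → ℝ^{N+1} be differentiable with p'(t) = M p(t) for all t ≥ 0 and p(0) = (u_0, 0, …, 0). Then u := p_0 satisfies the memory equation u'(t) = −a·u(t) + (a·b^N/(N−1)!)·∫_0^t s^{N−1} e^{−b s} u(t−s) ds for all t ≥ 0; i.e., the single-loop Markov process yields the Gamma-kernel memory equation with equal rates b. -/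
open MeasureTheory

theorem aux_deriv (b : ℝ) (N : ℕ) (q : ℕ → ℝ → ℝ)
    (hq : ∀ i < N, ∀ t : ℝ, 0 ≤ t → HasDerivAt (q i) (-b * q i t + b * q (i + 1) t) t)
    (t s : ℝ) (hs : s ≤ t) (n : ℕ) (hn : n + 1 ≤ N) :
    HasDerivAt (fun s => ∑ k ∈ Finset.range (n + 1),
        (b * s) ^ k / (k.factorial : ℝ) * Real.exp (-b * s) * q k (t - s))
      (-(b * ((b * s) ^ n / (n.factorial : ℝ) * Real.exp (-b * s) * q (n + 1) (t - s)))) s := by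
  have hlin : HasDerivAt (fun s : ℝ => b * s) b s := by
    simpa using (hasDerivAt_id s).const_mul b
  have hexp : HasDerivAt (fun s : ℝ => Real.exp (-b * s)) (Real.exp (-b * s) * (-b)) s := by
    have h1 : HasDerivAt (fun s : ℝ => -b * s) (-b) s := by
      simpa using (hasDerivAt_id s).const_mul (-b)
    exact h1.exp
  have hqq : ∀ i < N, HasDerivAt (fun s => q i (t - s))
      (-(-b * q i (t - s) + b * q (i + 1) (t - s))) s := by
    intro i hi
    exact (hq i hi (t - s) (by linarith)).comp_const_sub t s
  induction n with
  | zero =>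
    have h := hexp.mul (hqq 0 (by omega))
    refine HasDerivAt.congr_deriv (f := _) (h.congr_of_eventuallyEq ?_) ?_
    · exact Filter.Eventually.of_forall fun x => by simp
    · simp; ring
  | succ n ih =>
    have ih := ih (by omega)
    have h := ih.add ((((hlin.pow (n + 1)).div_const ((n + 1).factorial : ℝ)).mul hexp).mul
      (hqq (n + 1) (by omega)))
    refine HasDerivAt.congr_deriv (h.congr_of_eventuallyEq ?_) ?_
    · exact Filter.Eventually.of_forall fun x => by
        simp only [Finset.sum_range_succ _ (n + 1)]
        simp
    · have hf : (n.factorial : ℝ) ≠ 0 := by positivity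
      have hf' : (n : ℝ) + 1 ≠ 0 := by positivity
      simp only [Nat.factorial_succ, Pi.pow_apply, Pi.mul_apply]
      push_cast
      field_simp
      ring

/-- **Single loop gives the Gamma-kernel memory equation.**  The first component of the
single-loop Markov process with equal rates `b` satisfies
`u' = −a u + (a bᴺ/(N−1)!) ∫₀ᵗ s^{N−1} e^{−bs} u(t−s) ds`. -/
theorem stmt_18 (N : ℕ) (hN : 1 ≤ N) (a b : ℝ) (ha : 0 ≤ a) (hb : 0 < b) (u₀ : ℝ)
    (M : Matrix (Fin (N + 1)) (Fin (N + 1)) ℝ)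
    (hM : M = Matrix.of fun i j : Fin (N + 1) =>
      if (i : ℕ) = 0 ∧ (j : ℕ) = 0 then -a
      else if (i : ℕ) = (j : ℕ) then -b
      else if (j : ℕ) = (i : ℕ) + 1 then b
      else if (i : ℕ) = N ∧ (j : ℕ) = 0 then a
      else 0)
    (p : ℝ → Fin (N + 1) → ℝ)
    (hp : ∀ t : ℝ, 0 ≤ t → HasDerivAt p (M.mulVec (p t)) t)
    (hp0 : p 0 = fun i : Fin (N + 1) => if (i : ℕ) = 0 then u₀ else 0) :
    ∀ t : ℝ, 0 ≤ t →
      HasDerivAt (fun s => p s 0)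
        (-a * p t 0 + a * b ^ N / (Nat.factorial (N - 1)) *
          ∫ s in (0:ℝ)..t, s ^ (N - 1) * Real.exp (-b * s) * p (t - s) 0) t := by

  obtain ⟨n, rfl⟩ : ∃ n, N = n + 1 := ⟨N - 1, by omega⟩
  have hc : ∀ (i : Fin (n + 1 + 1)) (t : ℝ), 0 ≤ t →
      HasDerivAt (fun s => p s i) (M.mulVec (p t) i) t := fun i t ht =>
    (hasDerivAt_pi.1 (hp t ht)) i
  -- rows of the system
  have hrow0 : ∀ v : Fin (n + 1 + 1) → ℝ, M.mulVec v 0 = -a * v 0 + b * v 1 := by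
    intro v
    rw [hM, Matrix.mulVec, dotProduct, Fin.sum_univ_succ, Fin.sum_univ_succ]
    simp
  have hrowmid : ∀ (v : Fin (n + 1 + 1) → ℝ) (i : ℕ) (hi : i < n),
      M.mulVec v ⟨i + 1, by omega⟩ = -b * v ⟨i + 1, by omega⟩ + b * v ⟨i + 2, by omega⟩ := by
    intro v i hi
    rw [hM, Matrix.mulVec, dotProduct,
      Fintype.sum_eq_add (⟨i + 1, by omega⟩ : Fin (n + 1 + 1)) ⟨i + 2, by omega⟩]
    · simp
    · simp
    · rintro ⟨j, hj⟩ ⟨h1, h2⟩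
      simp only [ne_eq, Fin.mk.injEq] at h1 h2
      simp only [Matrix.of_apply]
      rw [if_neg (by omega), if_neg (by omega), if_neg (by omega), if_neg (by omega), zero_mul]
  have hrowlast : ∀ (v : Fin (n + 1 + 1) → ℝ),
      M.mulVec v ⟨n + 1, by omega⟩ = -b * v ⟨n + 1, by omega⟩ + a * v 0 := by
    intro v
    rw [hM, Matrix.mulVec, dotProduct,
      Fintype.sum_eq_add (⟨n + 1, by omega⟩ : Fin (n + 1 + 1)) 0]
    · simp
    · simp [Fin.ext_iff]
    · rintro ⟨j, hj⟩ ⟨h1, h2⟩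
      simp only [ne_eq, Fin.mk.injEq, Fin.ext_iff, Fin.val_zero] at h1 h2
      simp only [Matrix.of_apply]
      rw [if_neg (by omega), if_neg (by omega), if_neg (by omega), if_neg (by omega), zero_mul]
  let q : ℕ → ℝ → ℝ := fun i s =>
    if h : i < n + 1 then p s ⟨i + 1, by omega⟩ else a / b * p s 0
  have hq : ∀ i < n + 1, ∀ t : ℝ, 0 ≤ t →
      HasDerivAt (q i) (-b * q i t + b * q (i + 1) t) t := by
    intro i hi t ht
    have e : q i = fun s => p s ⟨i + 1, by omega⟩ := by
      funext s; simp only [q]; rw [dif_pos hi]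
    have h := hc ⟨i + 1, by omega⟩ t ht
    rw [e]
    refine h.congr_deriv ?_
    rcases Nat.lt_or_ge i n with h1 | h1
    · rw [hrowmid _ i h1]
      simp only [q]
      rw [dif_pos (by omega)]
    · obtain rfl : i = n := by omega
      rw [hrowlast]
      simp only [q]
      rw [dif_neg (by omega)]
      field_simp
  intro t ht
  have hu := hc 0 t ht
  rw [hrow0] at hu
  refine hu.congr_deriv ?_
  congr 1
  have hF := intervalIntegral.integral_eq_sub_of_hasDerivAt (a := 0) (b := t)
    (f := fun s => ∑ k ∈ Finset.range (n + 1),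
        (b * s) ^ k / (k.factorial : ℝ) * Real.exp (-b * s) * q k (t - s))
    (f' := fun s =>
      (-(b * ((b * s) ^ n / (n.factorial : ℝ) * Real.exp (-b * s) * q (n + 1) (t - s)))))
    (by
      intro s hs
      rw [Set.uIcc_of_le ht] at hs
      exact aux_deriv b (n + 1) q hq t s hs.2 n le_rfl)
    (by
      apply ContinuousOn.intervalIntegrable
      rw [Set.uIcc_of_le ht]
      have hcq : ContinuousOn (fun s => q (n + 1) (t - s)) (Set.Icc 0 t) := by
        intro s hs
        have h1 : ContinuousAt (fun s => p (t - s) 0) s :=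
          ((hc 0 (t - s) (by linarith [hs.2])).comp_const_sub t s).continuousAt
        have h2 : (fun s => q (n + 1) (t - s)) = fun s => a / b * p (t - s) 0 := by
          funext s; simp [q]
        rw [h2]
        exact (h1.const_mul _).continuousWithinAt
      have hg : ContinuousOn (fun s : ℝ => (b * s) ^ n / (n.factorial : ℝ) * Real.exp (-b * s))
          (Set.Icc 0 t) := by
        apply Continuous.continuousOn
        fun_prop
      exact ((hg.mul hcq).const_mul b).neg)
  have hFt : ∑ k ∈ Finset.range (n + 1),
        (b * t) ^ k / (k.factorial : ℝ) * Real.exp (-b * t) * q k (t - t) = 0 := by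
    apply Finset.sum_eq_zero
    intro k hk
    have hk := Finset.mem_range.1 hk
    have : q k (t - t) = 0 := by
      simp only [q]
      rw [dif_pos hk, sub_self, hp0]
      simp
    rw [this, mul_zero]
  have hF0 : ∑ k ∈ Finset.range (n + 1),
        (b * 0) ^ k / (k.factorial : ℝ) * Real.exp (-b * 0) * q k (t - 0) = p t 1 := by
    rw [Finset.sum_range_succ', Finset.sum_eq_zero]
    · simp [q]
    · intro k _
      simp
  simp only [hFt, hF0, zero_sub] at hF
  rw [intervalIntegral.integral_neg, neg_inj] at hF
  rw [← hF, ← intervalIntegral.integral_const_mul, ← intervalIntegral.integral_const_mul]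
  apply intervalIntegral.integral_congr
  intro s _
  have h2 : q (n + 1) (t - s) = a / b * p (t - s) 0 := by simp [q]
  simp only [h2, Nat.add_sub_cancel]
  field_simp
  ring
end
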